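/- Assume the curve setup with counterclockwise orientation and let a well distributed mesh with parameters κ ≥ 2 and M > 0 be given. Then there exist C > 0 and N₀ such that for every N ≥ N₀, every v ∈ ℝ^{N−1} and every γ ∈ ℝ, there is a unique z ∈ ℝ^N satisfying (L/N)·Σ_{j=1}^{N} B_N(i,j)·z_j = v_i for all 1 ≤ i ≤ N−1 and ⟨z⟩ = γ; moreover this solution satisfies ‖z‖_{ℓ²} ≤ C·(‖v‖ + |γ| + √N·|⟨v⟩|), where ‖v‖ = ((N−1)^{−1}·Σ_{i=1}^{N−1} v_i²)^{1/2} and ⟨v⟩ = (N−1)^{−1}·Σ_{i=1}^{N−1} v_i. -/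

import Mathlib

open Real MeasureTheory

/-- Dot product of two points of the plane `ℝ² ≃ ℂ`. -/
noncomputable def dotR (z w : ℂ) : ℝ := z.re * w.re + z.im * w.im

/-- The discretized singular (tangential) matrix. -/
noncomputable def Bmat (l : ℝ → ℂ) {N : ℕ} (a b : Fin N → ℝ) : Matrix (Fin N) (Fin N) ℝ :=
  Matrix.of fun i j => dotR (l (a i) - l (b j)) (deriv l (a i)) / ‖l (a i) - l (b j)‖ ^ 2

/-- The mean value of a vector. -/
noncomputable def avg {N : ℕ} (z : Fin N → ℝ) : ℝ := (N : ℝ)⁻¹ * ∑ i, z i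

/-- The normalized `ℓ²` norm of a vector. -/
noncomputable def l2norm {N : ℕ} (z : Fin N → ℝ) : ℝ := Real.sqrt ((N : ℝ)⁻¹ * ∑ i, z i ^ 2)

lemma cdiv_contDiffAt {n : WithTop ℕ∞} {f g : ℝ × ℝ → ℂ} {p : ℝ × ℝ} (hf : ContDiffAt ℝ n f p) (hg : ContDiffAt ℝ n g p)
    (h : g p ≠ 0) : ContDiffAt ℝ n (fun p => f p / g p) p := by
  simp only [div_eq_mul_inv]
  exact hf.mul (hg.inv h)

lemma hasFDerivAt_wint (w : ℝ → ℝ) (hw : Continuous w) (ψ : ℝ → ℂ) (hψ : ContDiff ℝ 1 ψ) (p : ℝ × ℝ) :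
    HasFDerivAt (fun p : ℝ × ℝ => ∫ θ in (0:ℝ)..1, w θ • ψ (p.2 + θ * (p.1 - p.2)))
      ((ContinuousLinearMap.fst ℝ ℝ ℝ).smulRight (∫ θ in (0:ℝ)..1, (w θ * θ) • deriv ψ (p.2 + θ * (p.1 - p.2)))
       + (ContinuousLinearMap.snd ℝ ℝ ℝ).smulRight (∫ θ in (0:ℝ)..1, (w θ * (1 - θ)) • deriv ψ (p.2 + θ * (p.1 - p.2)))) p := by
  have hd : Continuous (deriv ψ) := hψ.continuous_deriv le_rfl
  have hdiff : Differentiable ℝ ψ := hψ.differentiable one_ne_zero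
  have hc : Continuous ψ := hψ.continuous
  set F' : ℝ × ℝ → ℝ → (ℝ × ℝ →L[ℝ] ℂ) := fun p θ =>
    (ContinuousLinearMap.fst ℝ ℝ ℝ).smulRight ((w θ * θ) • deriv ψ (p.2 + θ * (p.1 - p.2)))
     + (ContinuousLinearMap.snd ℝ ℝ ℝ).smulRight ((w θ * (1 - θ)) • deriv ψ (p.2 + θ * (p.1 - p.2))) with hF'
  have hF'c : Continuous (Function.uncurry F') := by
    have h1 : ∀ (A : ℝ × ℝ →L[ℝ] ℝ), Continuous fun c : ℂ => (ContinuousLinearMap.smulRight A c) := 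
      fun A => (ContinuousLinearMap.smulRightL ℝ (ℝ×ℝ) ℂ A).continuous
    simp only [hF']
    refine Continuous.add ((h1 _).comp ?_) ((h1 _).comp ?_) <;> fun_prop
  -- bound on compact
  obtain ⟨C, hC⟩ := ((isCompact_closedBall p 1).prod (isCompact_Icc (a := (0:ℝ)) (b := 1))).exists_bound_of_continuousOn
    hF'c.continuousOn
  have key := intervalIntegral.hasFDerivAt_integral_of_dominated_of_fderiv_le (𝕜 := ℝ) (μ := volume) (a := 0) (b := 1)
    (F := fun (p : ℝ × ℝ) θ => w θ • ψ (p.2 + θ * (p.1 - p.2))) (F' := F') (x₀ := p) (bound := fun _ => C)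
    (s := Metric.ball p 1) (Metric.ball_mem_nhds p one_pos) ?_ ?_ ?_ ?_ ?_ ?_
  · have e1 : ∀ (A : ℝ × ℝ →L[ℝ] ℝ) (u : ℝ → ℂ), Continuous u → 
        (∫ θ in (0:ℝ)..1, ContinuousLinearMap.smulRight A (u θ)) = ContinuousLinearMap.smulRight A (∫ θ in (0:ℝ)..1, u θ) :=
      fun A u hu => (ContinuousLinearMap.smulRightL ℝ (ℝ×ℝ) ℂ A).intervalIntegral_comp_comm (hu.intervalIntegrable 0 1)
    have h1 : ∀ (A : ℝ × ℝ →L[ℝ] ℝ), Continuous fun c : ℂ => (ContinuousLinearMap.smulRight A c) := 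
      fun A => (ContinuousLinearMap.smulRightL ℝ (ℝ×ℝ) ℂ A).continuous
    have c1 : Continuous fun θ => (w θ * θ) • deriv ψ (p.2 + θ * (p.1 - p.2)) := by fun_prop
    have c2 : Continuous fun θ => (w θ * (1 - θ)) • deriv ψ (p.2 + θ * (p.1 - p.2)) := by fun_prop
    have e2 : (∫ θ in (0:ℝ)..1, F' p θ) = _ :=
      intervalIntegral.integral_add (((h1 (ContinuousLinearMap.fst ℝ ℝ ℝ)).comp c1).intervalIntegrable 0 1)
        (((h1 (ContinuousLinearMap.snd ℝ ℝ ℝ)).comp c2).intervalIntegrable 0 1)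
    rw [e2] at key
    rw [← e1 _ _ c1, ← e1 _ _ c2]
    exact key
  · refine Filter.Eventually.of_forall fun x => Continuous.aestronglyMeasurable ?_
    fun_prop
  · apply Continuous.intervalIntegrable; fun_prop
  · exact (hF'c.comp (Continuous.prodMk_right p)).aestronglyMeasurable
  · refine Filter.Eventually.of_forall fun θ hθ x hx => ?_
    rw [Set.uIoc_of_le zero_le_one] at hθ
    exact hC (x, θ) ⟨Metric.ball_subset_closedBall hx, hθ.1.le, hθ.2⟩
  · simp
  · refine Filter.Eventually.of_forall fun θ hθ x hx => ?_
    have h2 : HasFDerivAt (fun x : ℝ × ℝ => x.2 + θ * (x.1 - x.2)) 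
      (ContinuousLinearMap.snd ℝ ℝ ℝ + θ • (ContinuousLinearMap.fst ℝ ℝ ℝ - ContinuousLinearMap.snd ℝ ℝ ℝ)) x := by
      exact hasFDerivAt_snd.add ((hasFDerivAt_fst.sub hasFDerivAt_snd).const_mul θ)
    have h1 := ((hdiff _).hasDerivAt.hasFDerivAt.comp x h2).const_smul (w θ)
    convert h1 using 1
    · rfl
    apply ContinuousLinearMap.ext
    rintro ⟨x1, x2⟩
    simp only [F', ContinuousLinearMap.add_apply, ContinuousLinearMap.smulRight_apply, ContinuousLinearMap.smul_apply,
      ContinuousLinearMap.comp_apply, ContinuousLinearMap.toSpanSingleton_apply, ContinuousLinearMap.coe_fst',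
      ContinuousLinearMap.coe_snd', ContinuousLinearMap.sub_apply, Complex.real_smul, smul_eq_mul]
    push_cast; ring

lemma contDiff_wint (n : ℕ) : ∀ (w : ℝ → ℝ) (_ : Continuous w) (ψ : ℝ → ℂ) (_ : ContDiff ℝ n ψ),
    ContDiff ℝ n (fun p : ℝ × ℝ => ∫ θ in (0:ℝ)..1, w θ • ψ (p.2 + θ * (p.1 - p.2))) := by
  induction n with
  | zero =>
    intro w hw ψ hψ
    have hc := hψ.continuous
    simp only [Nat.cast_zero, contDiff_zero]
    apply intervalIntegral.continuous_parametric_intervalIntegral_of_continuous'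
    fun_prop
  | succ n ih =>
    intro w hw ψ hψ
    have h1 : ContDiff ℝ 1 ψ := hψ.of_le (by push_cast; exact le_add_self)
    have h2 : ContDiff ℝ n (deriv ψ) := by
      have := hψ
      push_cast at this
      exact (contDiff_succ_iff_deriv.1 this).2.2
    push_cast
    rw [contDiff_succ_iff_fderiv]
    refine ⟨fun p => (hasFDerivAt_wint w hw ψ h1 p).differentiableAt, by simp, ?_⟩
    have : fderiv ℝ (fun p : ℝ × ℝ => ∫ θ in (0:ℝ)..1, w θ • ψ (p.2 + θ * (p.1 - p.2))) = _ :=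
      funext fun p => (hasFDerivAt_wint w hw ψ h1 p).fderiv
    rw [this]
    have h3 : ∀ (A : ℝ × ℝ →L[ℝ] ℝ), ContDiff ℝ n fun c : ℂ => (ContinuousLinearMap.smulRight A c) := 
      fun A => (ContinuousLinearMap.smulRightL ℝ (ℝ×ℝ) ℂ A).contDiff
    exact ((h3 _).comp (ih _ (by fun_prop) _ h2)).add ((h3 _).comp (ih _ (by fun_prop) _ h2))

/-- difference quotient -/
noncomputable def dquo (φ : ℝ → ℂ) (p : ℝ × ℝ) : ℂ := ∫ θ in (0:ℝ)..1, deriv φ (p.2 + θ * (p.1 - p.2))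

lemma contDiff_dquo (n : ℕ) (φ : ℝ → ℂ) (h : ContDiff ℝ (n + 1) φ) : ContDiff ℝ n (dquo φ) := by
  have := contDiff_wint n (fun _ => 1) continuous_const (deriv φ) (contDiff_succ_iff_deriv.1 h).2.2
  simp only [one_smul] at this
  exact this

lemma dquo_spec (φ : ℝ → ℂ) (h : ContDiff ℝ 1 φ) (s t : ℝ) : φ s - φ t = (s - t) * dquo φ (s, t) := by
  have hd : Continuous (deriv φ) := h.continuous_deriv le_rfl
  have hdiff : Differentiable ℝ φ := h.differentiable one_ne_zero
  have := intervalIntegral.integral_eq_sub_of_hasDerivAt (a := 0) (b := 1) (f := fun θ : ℝ => φ (t + θ * (s - t)))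
    (f' := fun θ => ((s - t : ℝ) : ℂ) * deriv φ (t + θ * (s - t))) ?_ ?_
  · simp only [intervalIntegral.integral_const_mul] at this
    simp [dquo] at this ⊢
    rw [this]
  · intro θ _
    have h1 : HasDerivAt (fun θ : ℝ => t + θ * (s - t)) (s - t) θ := by
      simpa using ((hasDerivAt_id θ).mul_const (s - t)).const_add t
    have := (hdiff (t + θ * (s - t))).hasDerivAt.scomp θ h1
    simpa [Function.comp_def] using this
  · apply Continuous.intervalIntegrable; fun_prop

lemma dquo_diag (φ : ℝ → ℂ) (s : ℝ) : dquo φ (s, s) = deriv φ s := by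
  simp [dquo]

/-- unit circle parametrization -/
noncomputable def ec (L : ℝ) (s : ℝ) : ℂ := Complex.exp (2 * π * Complex.I * s / L)

lemma ec_contDiff (L : ℝ) {n : WithTop ℕ∞} : ContDiff ℝ n (ec L) := by
  unfold ec
  apply ContDiff.cexp
  have : ContDiff ℝ n (fun s : ℝ => (s : ℂ)) := Complex.ofRealCLM.contDiff
  fun_prop

lemma ec_hasDerivAt (L : ℝ) (s : ℝ) : HasDerivAt (ec L) (2 * π * Complex.I / L * ec L s) s := by
  have h : HasDerivAt (fun s : ℝ => 2 * π * Complex.I * (s : ℂ) / L) (2 * π * Complex.I / L) s := by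
    have := ((Complex.ofRealCLM.hasDerivAt (x := s)).const_mul (2 * π * Complex.I)).div_const (L : ℂ)
    simpa using this
  have := h.cexp
  unfold ec
  convert this using 1; ring

lemma ec_eq_iff (L : ℝ) (hL : 0 < L) (s t : ℝ) : ec L s = ec L t ↔ ∃ m : ℤ, s = t + m * L := by
  unfold ec
  rw [Complex.exp_eq_exp_iff_exists_int]
  have hL' : (L : ℂ) ≠ 0 := by exact_mod_cast hL.ne'
  have hpi : (π : ℂ) ≠ 0 := by exact_mod_cast Real.pi_ne_zero
  constructor
  · rintro ⟨m, hm⟩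
    refine ⟨m, ?_⟩
    have : (2 * π * Complex.I) * s = (2 * π * Complex.I) * (t + m * L) := by
      field_simp at hm
      linear_combination (2 * (π:ℂ) * Complex.I) * hm
    have := mul_left_cancel₀ (by simp [hpi]) this
    exact_mod_cast this
  · rintro ⟨m, hm⟩
    refine ⟨m, ?_⟩
    rw [hm]; push_cast; field_simp

lemma ec_periodic (L : ℝ) (hL : 0 < L) (s : ℝ) : ec L (s + L) = ec L s :=
  (ec_eq_iff L hL _ _).2 ⟨1, by simp⟩

open Classical in
/-- the regularized quotient `(φ s - φ t)/(e s - e t)` -/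
noncomputable def qf (L : ℝ) (φ : ℝ → ℂ) (p : ℝ × ℝ) : ℂ :=
  if ec L p.1 = ec L p.2 then deriv φ p.1 / deriv (ec L) p.1
  else (φ p.1 - φ p.2) / (ec L p.1 - ec L p.2)

lemma deriv_periodic' {L : ℝ} {φ : ℝ → ℂ} (hp : ∀ s, φ (s + L) = φ s) (s : ℝ) : deriv φ (s + L) = deriv φ s := by
  rw [← deriv_comp_add_const]; congr 1; ext x; exact hp x

lemma deriv_ec_ne (L : ℝ) (hL : 0 < L) (s : ℝ) : deriv (ec L) s ≠ 0 := by
  rw [(ec_hasDerivAt L s).deriv]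
  have hL' : (L : ℂ) ≠ 0 := by exact_mod_cast hL.ne'
  simp [Real.pi_ne_zero, ec, hL.ne']

lemma contDiff_qf (L : ℝ) (hL : 0 < L) (n : ℕ) (φ : ℝ → ℂ) (h : ContDiff ℝ (n + 1) φ)
    (hp : ∀ s, φ (s + L) = φ s) : ContDiff ℝ n (qf L φ) := by
  have h1 : ContDiff ℝ 1 φ := h.of_le le_add_self
  have h0 : ContDiff ℝ n φ := h.of_le le_self_add
  rw [contDiff_iff_contDiffAt]
  rintro ⟨s0, t0⟩
  by_cases he : ec L s0 = ec L t0
  · obtain ⟨m, hm⟩ := (ec_eq_iff L hL _ _).1 he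
    have hφm : ∀ s, φ (s - m * L) = φ s := fun s => (show Function.Periodic φ L from hp).sub_int_mul_eq m
    have hem : ∀ s, ec L (s - m * L) = ec L s := fun s => (show Function.Periodic (ec L) L from ec_periodic L hL).sub_int_mul_eq m
    have hφm' : ∀ s, deriv φ (s - m * L) = deriv φ s := fun s => (show Function.Periodic (deriv φ) L from deriv_periodic' hp).sub_int_mul_eq m
    have hem' : ∀ s, deriv (ec L) (s - m * L) = deriv (ec L) s := fun s => (show Function.Periodic (deriv (ec L)) L from deriv_periodic' (ec_periodic L hL)).sub_int_mul_eq m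
    have hev : ∀ᶠ p : ℝ × ℝ in nhds (s0, t0), |p.1 - m * L - p.2| < L := by
      have hc : Continuous fun p : ℝ × ℝ => |p.1 - m * L - p.2| := by fun_prop
      apply hc.continuousAt.eventually_lt continuousAt_const
      simp [hm, hL]
    have hsh : ContDiff ℝ n fun p : ℝ × ℝ => (p.1 - m * L, p.2) := by fun_prop
    have hDe : ∀ p : ℝ × ℝ, |p.1 - m * L - p.2| < L → dquo (ec L) (p.1 - m * L, p.2) ≠ 0 := by
      intro p hpp h0
      have h2 := dquo_spec (ec L) (ec_contDiff L) (p.1 - m * L) p.2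
      rw [h0, mul_zero, sub_eq_zero] at h2
      obtain ⟨k, hk⟩ := (ec_eq_iff L hL _ _).1 h2
      have : k = 0 := by
        have h3 : p.1 - m * L - p.2 = k * L := by linarith
        rw [h3, abs_mul, abs_of_pos hL] at hpp
        have : |(k:ℝ)| < 1 := by nlinarith
        have : |k| < 1 := by exact_mod_cast this
        exact Int.abs_lt_one_iff.1 this
      rw [this] at hk
      have h4 : p.1 - m * L = p.2 := by simpa using hk
      rw [h4, dquo_diag] at h0
      exact deriv_ec_ne L hL _ h0
    have hcd : ContDiffAt ℝ n (fun p : ℝ × ℝ => dquo φ (p.1 - m * L, p.2) / dquo (ec L) (p.1 - m * L, p.2)) (s0, t0) :=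
      cdiv_contDiffAt (((contDiff_dquo n φ h).comp hsh).contDiffAt) (((contDiff_dquo n (ec L) (ec_contDiff L)).comp hsh).contDiffAt)
        (hDe _ (by simp [hm, hL]))
    refine hcd.congr_of_eventuallyEq ?_
    filter_upwards [hev] with p hp'
    unfold qf
    split_ifs with hh
    · obtain ⟨k, hk⟩ := (ec_eq_iff L hL _ _).1 hh
      have : k - m = 0 := by
        have h3 : p.1 - m * L - p.2 = ((k - m : ℤ) : ℝ) * L := by push_cast; linarith
        rw [h3, abs_mul, abs_of_pos hL] at hp'
        have : |((k-m:ℤ):ℝ)| < 1 := by nlinarith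
        have : |k-m| < 1 := by exact_mod_cast this
        exact Int.abs_lt_one_iff.1 this
      have : k = m := by omega
      have h4 : p.2 = p.1 - m * L := by rw [hk, this]; ring
      rw [h4, dquo_diag, dquo_diag, hφm', hem']
    · have a1 := dquo_spec φ h1 (p.1 - m * L) p.2
      have a2 := dquo_spec (ec L) (ec_contDiff L) (p.1 - m * L) p.2
      rw [hφm] at a1
      rw [hem] at a2
      have hne : (((p.1 - m * L : ℝ) : ℂ) - (p.2 : ℂ)) ≠ 0 := by
        intro h0
        rw [h0, zero_mul, sub_eq_zero] at a2
        exact hh a2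
      rw [a1, a2, mul_div_mul_left _ _ hne]
  · have hev : ∀ᶠ p : ℝ × ℝ in nhds (s0, t0), ec L p.1 ≠ ec L p.2 := by
      have hc : Continuous (ec L) := (ec_contDiff L (n := 0)).continuous
      exact (isOpen_ne_fun (hc.comp continuous_fst) (hc.comp continuous_snd)).mem_nhds he
    have hE : ContDiff ℝ n (ec L) := ec_contDiff L
    have hcd : ContDiffAt ℝ n (fun p : ℝ × ℝ => (φ p.1 - φ p.2) / (ec L p.1 - ec L p.2)) (s0, t0) :=
      cdiv_contDiffAt ((h0.comp contDiff_fst).sub (h0.comp contDiff_snd)).contDiffAt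
       ((hE.comp contDiff_fst).sub (hE.comp contDiff_snd)).contDiffAt (sub_ne_zero.2 he)
    refine hcd.congr_of_eventuallyEq ?_
    filter_upwards [hev] with p hp'
    simp [qf, hp']

lemma qf_per1 (L : ℝ) (hL : 0 < L) (φ : ℝ → ℂ) (hp : ∀ s, φ (s + L) = φ s) (s t : ℝ) :
    qf L φ (s + L, t) = qf L φ (s, t) := by
  simp [qf, ec_periodic L hL, hp, deriv_periodic' hp, deriv_periodic' (ec_periodic L hL)]

lemma qf_per2 (L : ℝ) (hL : 0 < L) (φ : ℝ → ℂ) (hp : ∀ s, φ (s + L) = φ s) (s t : ℝ) :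
    qf L φ (s, t + L) = qf L φ (s, t) := by
  simp [qf, ec_periodic L hL, hp]

lemma qf_spec (L : ℝ) (φ : ℝ → ℂ) (s t : ℝ) (h : ec L s ≠ ec L t) :
    φ s - φ t = qf L φ (s, t) * (ec L s - ec L t) := by
  simp [qf, h, sub_ne_zero.2 h]

/-- the tangential kernel -/
noncomputable def beta (l : ℝ → ℂ) (s t : ℝ) : ℝ := dotR (l s - l t) (deriv l s) / ‖l s - l t‖ ^ 2

lemma beta_eq (l : ℝ → ℂ) (s t : ℝ) : beta l s t = (deriv l s / (l s - l t)).re := by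
  unfold beta dotR
  rw [Complex.div_re, ← Complex.normSq_eq_norm_sq]
  ring

lemma ec_sub (L : ℝ) (s t : ℝ) : ec L s - ec L t =
    ec L ((s + t) / 2) * (2 * Complex.I * (Real.sin (π * (s - t) / L) : ℝ)) := by
  have h1 : ec L s = ec L ((s + t) / 2) * Complex.exp ((π * (s - t) / L) * Complex.I) := by
    unfold ec; rw [← Complex.exp_add]; congr 1; push_cast; ring
  have h2 : ec L t = ec L ((s + t) / 2) * Complex.exp (-(π * (s - t) / L) * Complex.I) := by
    unfold ec; rw [← Complex.exp_add]; congr 1; push_cast; ring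
  rw [h1, h2]
  have := Complex.two_sin (π * (s - t) / L)
  push_cast
  have hI : Complex.I * Complex.I = -1 := Complex.I_mul_I
  linear_combination (-(ec L ((s + t) / 2) * Complex.I)) * this - (ec L ((s + t) / 2)) * (Complex.exp (-(π * (s - t) / L) * Complex.I) - Complex.exp ((π * (s - t) / L) * Complex.I)) * hI

lemma norm_ec (L s : ℝ) : ‖ec L s‖ = 1 := by
  unfold ec
  rw [show 2 * (π:ℂ) * Complex.I * s / L = ((2 * π * s / L : ℝ) : ℂ) * Complex.I by push_cast; ring]
  exact Complex.norm_exp_ofReal_mul_I _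

lemma norm_ec_sub (L s t : ℝ) : ‖ec L s - ec L t‖ = 2 * |Real.sin (π * (s - t) / L)| := by
  rw [ec_sub, norm_mul, norm_ec, norm_mul, norm_mul, Complex.norm_real, Complex.norm_I, Real.norm_eq_abs]
  simp

lemma ec_cot (L : ℝ) (s t : ℝ) (h : ec L s ≠ ec L t) :
    (deriv (ec L) s / (ec L s - ec L t)).re = π / L * Real.cot (π * (s - t) / L) := by
  have hs : Real.sin (π * (s - t) / L) ≠ 0 := by
    intro h0
    apply h
    rw [← sub_eq_zero, ec_sub, h0]; simp
  have hsc : (Complex.sin (π * (s - t) / L)) ≠ 0 := by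
    have : ((Real.sin (π * (s - t) / L) : ℝ) : ℂ) ≠ 0 := by exact_mod_cast hs
    push_cast at this; exact this
  have h1 : ec L s = ec L ((s + t) / 2) * Complex.exp ((π * (s - t) / L) * Complex.I) := by
    unfold ec; rw [← Complex.exp_add]; congr 1; push_cast; ring
  have hE : ec L ((s + t) / 2) ≠ 0 := Complex.exp_ne_zero _
  have : deriv (ec L) s / (ec L s - ec L t) =
      ((π / L : ℝ) : ℂ) * (((Real.cos (π * (s - t) / L) / Real.sin (π * (s - t) / L) : ℝ) : ℂ) + Complex.I) := by
    rw [(ec_hasDerivAt L s).deriv, ec_sub, h1, Complex.exp_mul_I]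
    push_cast
    field_simp
  rw [this, Complex.re_ofReal_mul, Real.cot_eq_cos_div_sin, Complex.add_re,
    Complex.ofReal_re, Complex.I_re, add_zero]

lemma hasDerivAt_lognorm {f : ℝ → ℂ} {f' : ℂ} {s : ℝ} (hf : HasDerivAt f f' s) (h0 : f s ≠ 0) :
    HasDerivAt (fun s => Real.log (‖f s‖ ^ 2) / 2) (f' / f s).re s := by
  have h1 := (hf.norm_sq.log (by simpa using h0)).div_const 2
  suffices e : (f' / f s).re = 2 * inner ℝ (f s) f' / ‖f s‖ ^ 2 / 2 by rw [e]; exact h1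
  have : ‖f s‖ ^ 2 = Complex.normSq (f s) := (Complex.normSq_eq_norm_sq _).symm
  rw [this, Complex.div_re]
  simp only [Complex.inner, Complex.mul_re, Complex.conj_re, Complex.conj_im]
  ring

lemma l_eq_imp (L : ℝ) (hL : 0 < L) (l : ℝ → ℂ) (hper : ∀ s, l (s + L) = l s)
    (hinj : Set.InjOn l (Set.Ico 0 L)) (s t : ℝ) (h : l s = l t) : ec L s = ec L t := by
  rw [ec_eq_iff L hL]
  have hm : ∀ x, l (toIcoMod hL 0 x) = l x := by
    intro x
    rw [← self_sub_toIcoDiv_zsmul, zsmul_eq_mul]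
    exact (show Function.Periodic l L from hper).sub_int_mul_eq _
  have := hinj (toIcoMod_mem_Ico' hL s) (toIcoMod_mem_Ico' hL t) (by rw [hm, hm, h])
  rw [← self_sub_toIcoDiv_zsmul, ← self_sub_toIcoDiv_zsmul, zsmul_eq_mul, zsmul_eq_mul] at this
  refine ⟨toIcoDiv hL 0 s - toIcoDiv hL 0 t, ?_⟩
  push_cast; linarith

lemma qf_ne (L : ℝ) (hL : 0 < L) (l : ℝ → ℂ) (hper : ∀ s, l (s + L) = l s)
    (harc : ∀ s, ‖deriv l s‖ = 1)
    (hinj : Set.InjOn l (Set.Ico 0 L)) (p : ℝ × ℝ) : qf L l p ≠ 0 := by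
  unfold qf
  split_ifs with h
  · apply div_ne_zero _ (deriv_ec_ne L hL _)
    intro h0; have := harc p.1; rw [h0] at this; simp at this
  · exact div_ne_zero (sub_ne_zero.2 fun h' => h (l_eq_imp L hL l hper hinj _ _ h')) (sub_ne_zero.2 h)

lemma exists_K (L : ℝ) (hL : 0 < L) (l : ℝ → ℂ)
    (hsm : ContDiff ℝ (⊤ : ℕ∞) l) (hper : ∀ s, l (s + L) = l s)
    (harc : ∀ s, ‖deriv l s‖ = 1) (hinj : Set.InjOn l (Set.Ico 0 L)) :
    ∃ K : ℝ × ℝ → ℝ, ContDiff ℝ 1 K ∧ (∀ s t, K (s, t + L) = K (s, t)) ∧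
      (∀ t, ∫ s in (0:ℝ)..L, K (s, t) = 0) ∧
      ∀ s t, ec L s ≠ ec L t → beta l s t = π / L * Real.cot (π * (s - t) / L) + K (s, t) := by
  have hq : ContDiff ℝ 2 (qf L l) := contDiff_qf L hL 2 l (hsm.of_le (by norm_cast)) hper
  have hq0 := qf_ne L hL l hper harc hinj
  set k : ℝ × ℝ → ℝ := fun p => Real.log (‖qf L l p‖ ^ 2) / 2 with hk
  have hkC : ContDiff ℝ 2 k := by
    apply ContDiff.div_const
    apply ContDiff.log
    · exact hq.norm_sq ℝ
    · intro p; simpa using hq0 p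
  have hdl : Differentiable ℝ l := hsm.differentiable (by simp)
  have hkd : ∀ s t, HasDerivAt (fun s => k (s, t)) (fderiv ℝ k (s, t) (1, 0)) s := by
    intro s t
    have h1 : HasFDerivAt k (fderiv ℝ k (s, t)) (s, t) := (hkC.differentiable (by simp) _).hasFDerivAt
    have h2 : HasDerivAt (fun s : ℝ => (s, t)) ((1:ℝ), (0:ℝ)) s := (hasDerivAt_id s).prodMk (hasDerivAt_const s t)
    exact h1.comp_hasDerivAt s h2
  have hKC : ContDiff ℝ 1 fun p => fderiv ℝ k p (1, 0) := by
    exact (hkC.fderiv_right (m := 1) (by norm_num)).clm_apply contDiff_const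
  refine ⟨fun p => fderiv ℝ k p (1, 0), hKC, ?_, ?_, ?_⟩
  · intro s t
    refine (hkd s (t + L)).unique ?_
    have := hkd s t
    refine this.congr_of_eventuallyEq (Filter.Eventually.of_forall fun x => ?_)
    simp [hk, qf_per2 L hL l hper]
  · intro t
    rw [intervalIntegral.integral_eq_sub_of_hasDerivAt (fun s _ => hkd s t)]
    · have := qf_per1 L hL l hper 0 t
      simp only [zero_add] at this
      simp [hk, this]
    · apply Continuous.intervalIntegrable
      exact hKC.continuous.comp (by fun_prop)
  · intro s t hst
    have hlst : l s ≠ l t := fun h => hst (l_eq_imp L hL l hper hinj _ _ h)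
    have h1 : HasDerivAt (fun s => Real.log (‖l s - l t‖ ^ 2) / 2) (beta l s t) s := by
      rw [beta_eq]
      exact hasDerivAt_lognorm ((hdl s).hasDerivAt.sub_const (l t)) (sub_ne_zero.2 hlst)
    have h2 : HasDerivAt (fun s => Real.log (‖ec L s - ec L t‖ ^ 2) / 2) (π / L * Real.cot (π * (s - t) / L)) s := by
      rw [← ec_cot L s t hst]
      exact hasDerivAt_lognorm ((ec_hasDerivAt L s).differentiableAt.hasDerivAt.sub_const (ec L t)) (sub_ne_zero.2 hst)
    have h3 := h1.sub h2
    have hev : (fun s => k (s, t)) =ᶠ[nhds s] fun s => Real.log (‖l s - l t‖ ^ 2) / 2 - Real.log (‖ec L s - ec L t‖ ^ 2) / 2 := by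
      have hc : Continuous (ec L) := (ec_contDiff L (n := 0)).continuous
      filter_upwards [(isOpen_ne_fun hc continuous_const).mem_nhds hst] with x hx
      have hx' : ec L x ≠ ec L t := hx
      have := qf_spec L l x t hx'
      rw [this, norm_mul, mul_pow, Real.log_mul]
      · simp only [hk]; ring
      · simpa using hq0 _
      · simpa using sub_ne_zero.2 hx'
    have := (hkd s t).unique (h3.congr_of_eventuallyEq hev)
    show beta l s t = _ + (fderiv ℝ k (s, t)) (1, 0)
    rw [this]; ring

lemma exists_m (L : ℝ) (hL : 0 < L) (l : ℝ → ℂ)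
    (hsm : ContDiff ℝ (⊤ : ℕ∞) l) (hper : ∀ s, l (s + L) = l s)
    (harc : ∀ s, ‖deriv l s‖ = 1) (hinj : Set.InjOn l (Set.Ico 0 L))
    (φ : ℝ → ℝ) (hφ : ContDiff ℝ 1 φ) (hφp : ∀ s, φ (s + L) = φ s) :
    ∃ m : ℝ × ℝ → ℝ, Continuous m ∧ (∀ s t, m (s, t + L) = m (s, t)) ∧
      ∀ s t, ec L s ≠ ec L t → m (s, t) = (φ s - φ t) * beta l s t := by
  have hq : ContDiff ℝ 2 (qf L l) := contDiff_qf L hL 2 l (hsm.of_le (by norm_cast)) hper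
  have hq0 := qf_ne L hL l hper harc hinj
  set Φ : ℝ → ℂ := fun s => (φ s : ℂ) with hΦ
  have hΦp : ∀ s, Φ (s + L) = Φ s := fun s => by simp [hΦ, hφp]
  have hΦC : ContDiff ℝ 1 Φ := Complex.ofRealCLM.contDiff.comp hφ
  have hq1 : ContDiff ℝ 0 (qf L Φ) := by
    have := contDiff_qf L hL 0 Φ (by simpa using hΦC) hΦp
    simpa using this
  have hdc : Continuous (deriv l) := hsm.continuous_deriv (by simp)
  refine ⟨fun p => (qf L Φ p / qf L l p * deriv l p.1).re, ?_, ?_, ?_⟩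
  · apply Complex.continuous_re.comp
    exact (hq1.continuous.div hq.continuous hq0).mul (hdc.comp continuous_fst)
  · intro s t
    simp [qf_per2 L hL l hper, qf_per2 L hL Φ hΦp]
  · intro s t hst
    have hlst : l s ≠ l t := fun h => hst (l_eq_imp L hL l hper hinj _ _ h)
    have a := sub_ne_zero.2 hlst
    have b := sub_ne_zero.2 hst
    have : qf L Φ (s, t) / qf L l (s, t) * deriv l s = ((φ s - φ t : ℝ) : ℂ) * (deriv l s / (l s - l t)) := by
      simp only [qf, hst, if_false, hΦ]
      push_cast
      field_simp
    simp only [this]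
    rw [Complex.re_ofReal_mul, beta_eq]

lemma exists_chord (L : ℝ) (hL : 0 < L) (l : ℝ → ℂ)
    (hsm : ContDiff ℝ (⊤ : ℕ∞) l) (hper : ∀ s, l (s + L) = l s)
    (harc : ∀ s, ‖deriv l s‖ = 1) (hinj : Set.InjOn l (Set.Ico 0 L)) :
    ∃ c > 0, ∀ s ∈ Set.Icc 0 L, ∀ t, |s - t| ≤ L / 2 → c * |s - t| ≤ ‖l s - l t‖ := by
  have hq : ContDiff ℝ 2 (qf L l) := contDiff_qf L hL 2 l (hsm.of_le (by norm_cast)) hper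
  have hq0 := qf_ne L hL l hper harc hinj
  obtain ⟨p0, -, hp0⟩ := ((isCompact_Icc (a := (0:ℝ)) (b := L)).prod (isCompact_Icc (a := -L) (b := 2 * L))).exists_isMinOn
    (f := fun p => ‖qf L l p‖) ⟨(0, 0), by simp [hL.le]⟩ hq.continuous.norm.continuousOn
  have hc0 : 0 < ‖qf L l p0‖ := norm_pos_iff.2 (hq0 p0)
  refine ⟨‖qf L l p0‖ * (4 / L), by positivity, ?_⟩
  intro s hs t hst
  have hab := abs_le.1 hst
  by_cases he : ec L s = ec L t
  · obtain ⟨m, hm⟩ := (ec_eq_iff L hL _ _).1 he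
    have : m = 0 := by
      have h3 : s - t = m * L := by linarith
      rw [h3, abs_mul, abs_of_pos hL] at hst
      have : |(m:ℝ)| < 1 := by nlinarith
      have : |m| < 1 := by exact_mod_cast this
      exact Int.abs_lt_one_iff.1 this
    rw [this] at hm
    simp at hm
    simp [hm]
  · rw [qf_spec L l s t he, norm_mul, norm_ec_sub]
    have h1 : ‖qf L l p0‖ ≤ ‖qf L l (s, t)‖ := hp0 (Set.mk_mem_prod hs ⟨by linarith [hs.1, hs.2], by linarith [hs.1, hs.2]⟩)
    have h2 : 4 / L * |s - t| ≤ 2 * |Real.sin (π * (s - t) / L)| := by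
      have e : |π * (s - t) / L| = π / L * |s - t| := by
        rw [abs_div, abs_mul, abs_of_pos hL, abs_of_pos Real.pi_pos]; ring
      have := Real.mul_abs_le_abs_sin (x := π * (s - t) / L) (by
        rw [e]
        calc π / L * |s - t| ≤ π / L * (L / 2) := by gcongr
          _ = π / 2 := by field_simp)
      rw [e] at this
      have e2 : 2 / π * (π / L * |s - t|) = 2 / L * |s - t| := by field_simp
      rw [e2] at this
      calc 4 / L * |s - t| = 2 * (2 / L * |s - t|) := by ring
        _ ≤ _ := by linarith
    rw [mul_assoc]
    gcongr

/-- half-shifted cotangent nodes -/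
noncomputable def cn (N : ℕ) (m : ℤ) : ℝ := Real.cot (π * (m + 1 / 2) / N)

lemma sin_lower (N : ℕ) (hN : 0 < N) (m : ℤ) : 1 / (N:ℝ) ≤ |Real.sin (π * (m + 1 / 2) / N)| := by
  have hN' : (0:ℝ) < N := by exact_mod_cast hN
  have hNz : (0:ℤ) < N := by exact_mod_cast hN
  set r := m % (N:ℤ)
  set q := m / (N:ℤ)
  have hm : m = r + N * q := (Int.emod_add_mul_ediv m N).symm
  have hr0 : 0 ≤ r := Int.emod_nonneg _ hNz.ne'
  have hr1 : r + 1 ≤ N := Int.emod_lt_of_pos _ hNz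
  have hr0' : (0:ℝ) ≤ r := by exact_mod_cast hr0
  have hr1' : (r:ℝ) + 1 ≤ N := by exact_mod_cast hr1
  have e : π * (m + 1 / 2) / N = π * (r + 1 / 2) / N + q * π := by
    rw [hm]; push_cast; field_simp; ring
  rw [e, Real.sin_add_int_mul_pi, abs_mul]
  simp only [abs_zpow, abs_neg, abs_one, one_zpow, one_mul]
  have hpi := Real.pi_pos
  rcases le_total (π * (r + 1 / 2) / N) (π / 2) with h | h
  · have := Real.mul_le_sin (x := π * (r + 1 / 2) / N) (by positivity) h
    refine le_trans ?_ (le_trans this (le_abs_self _))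
    rw [show 2 / π * (π * (r + 1 / 2) / N) = (2 * r + 1) / N by field_simp]
    gcongr; linarith
  · have h2 : π - π * (r + 1 / 2) / N = π * (N - r - 1 / 2) / N := by field_simp; ring
    have := Real.mul_le_sin (x := π - π * (r + 1 / 2) / N) (by
      rw [h2]; apply div_nonneg _ hN'.le; apply mul_nonneg hpi.le; linarith) (by linarith)
    rw [Real.sin_pi_sub] at this
    refine le_trans ?_ (le_trans this (le_abs_self _))
    rw [h2, show 2 / π * (π * (N - r - 1 / 2) / N) = (2 * (N - r) - 1) / N by field_simp]
    gcongr; linarith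

lemma cn_periodic (N : ℕ) (hN : 0 < N) (m : ℤ) : cn N (m + N) = cn N m := by
  have hN' : (N:ℝ) ≠ 0 := by exact_mod_cast hN.ne'
  unfold cn
  have : π * (((m + N : ℤ):ℝ) + 1 / 2) / N = π * (m + 1 / 2) / N + π := by
    push_cast; field_simp; ring
  rw [this, Real.cot_eq_cos_div_sin, Real.cot_eq_cos_div_sin, Real.cos_add_pi, Real.sin_add_pi, neg_div_neg_eq]

lemma cn_neg (N : ℕ) (m : ℤ) : cn N (-1 - m) = - cn N m := by
  unfold cn
  have : π * (((-1 - m : ℤ):ℝ) + 1 / 2) / N = -(π * (m + 1 / 2) / N) := by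
    push_cast; ring
  rw [this, Real.cot_eq_cos_div_sin, Real.cot_eq_cos_div_sin, Real.cos_neg, Real.sin_neg, div_neg]

lemma sum_cn (N : ℕ) (hN : 0 < N) (k : ℤ) : ∑ i : Fin N, cn N ((i : ℕ) + k) = 0 := by
  rw [Fin.sum_univ_eq_sum_range (fun i : ℕ => cn N ((i:ℤ) + k)) N]
  have step : ∀ k : ℤ, ∑ i ∈ Finset.range N, cn N ((i:ℤ) + (k + 1)) = ∑ i ∈ Finset.range N, cn N ((i:ℤ) + k) := by
    intro k
    have h1 := Finset.sum_range_succ (fun i : ℕ => cn N ((i:ℤ) + k)) N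
    rw [Finset.sum_range_succ'] at h1
    have h2 : cn N ((N:ℤ) + k) = cn N (((0:ℕ):ℤ) + k) := by
      rw [add_comm, cn_periodic N hN]; simp
    rw [h2] at h1
    have := add_right_cancel h1
    rw [← this]
    refine Finset.sum_congr rfl fun i _ => ?_
    congr 1; push_cast; ring
  have h0 : ∀ k : ℤ, ∑ i ∈ Finset.range N, cn N ((i:ℤ) + k) = ∑ i ∈ Finset.range N, cn N ((i:ℤ) + 0) := by
    intro k
    induction k using Int.induction_on with
    | zero => rfl
    | succ n ih => rw [step, ih]
    | pred n ih => rw [← ih, ← step (-(n:ℤ) - 1)]; simp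
  rw [h0]
  have h3 : ∑ i ∈ Finset.range N, cn N ((i:ℤ) + 0) = - ∑ i ∈ Finset.range N, cn N ((i:ℤ) + 0) := by
    conv_lhs => rw [← Finset.sum_range_reflect]
    rw [← Finset.sum_neg_distrib]
    refine Finset.sum_congr rfl fun i hi => ?_
    have := Finset.mem_range.1 hi
    rw [← cn_neg, ← cn_periodic N hN (-1 - _)]
    congr 1
    omega
  linarith

lemma sum_cn_left (N : ℕ) (j : Fin N) : ∑ i : Fin N, cn N ((i : ℕ) - (j : ℕ)) = 0 := by
  have := sum_cn N (Fin.pos j) (-(j:ℕ))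
  simpa [sub_eq_add_neg] using this

lemma sum_cn_right (N : ℕ) (i : Fin N) : ∑ j : Fin N, cn N ((i : ℕ) - (j : ℕ)) = 0 := by
  have := sum_cn N (Fin.pos i) (-1 - (i:ℕ))
  rw [← neg_eq_zero, ← Finset.sum_neg_distrib, ← this]
  refine Finset.sum_congr rfl fun j _ => ?_
  rw [← cn_neg]; congr 1; ring

lemma cot_mul (a b : ℝ) (ha : Real.sin a ≠ 0) (hb : Real.sin b ≠ 0) (hab : Real.sin (a - b) ≠ 0) :
    Real.cot a * Real.cot b = -1 + Real.cot (a - b) * (Real.cot b - Real.cot a) := by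
  simp only [Real.cot_eq_cos_div_sin]
  have : Real.cos b / Real.sin b - Real.cos a / Real.sin a = Real.sin (a - b) / (Real.sin a * Real.sin b) := by
    rw [Real.sin_sub]; field_simp
  rw [this, Real.cos_sub]
  rw [div_mul_div_comm, div_mul_div_comm, eq_comm, add_comm, ← sub_eq_add_neg, sub_eq_iff_eq_add, div_eq_iff (by positivity)]
  field_simp

lemma sin_cn_ne (N : ℕ) (hN : 0 < N) (m : ℤ) : Real.sin (π * (m + 1 / 2) / N) ≠ 0 := by
  have := sin_lower N hN m
  have hN' : (0:ℝ) < N := by exact_mod_cast hN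
  exact abs_pos.1 (lt_of_lt_of_le (by positivity) this)

lemma gram_off (N : ℕ) (j k : Fin N) (hjk : j ≠ k) :
    ∑ i : Fin N, cn N ((i:ℕ) - (j:ℕ)) * cn N ((i:ℕ) - (k:ℕ)) = -N := by
  have hN : 0 < N := Fin.pos j
  have hN' : (N:ℝ) ≠ 0 := by exact_mod_cast hN.ne'
  have hs : Real.sin (π * ((k:ℕ) - (j:ℕ)) / N) ≠ 0 := by
    intro h0
    obtain ⟨n, hn⟩ := Real.sin_eq_zero_iff.1 h0
    have h1 : (n:ℝ) * N = (k:ℕ) - (j:ℕ) := by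
      field_simp at hn
      have hpi := Real.pi_pos
      nlinarith
    have h2 : n * (N:ℤ) = (k:ℕ) - (j:ℕ) := by exact_mod_cast h1
    have hj := j.2
    have hk := k.2
    have hn0 : n = 0 := by
      by_contra hne
      rcases lt_or_gt_of_ne hne with h | h
      · have : n * (N:ℤ) ≤ -1 * N := by gcongr; omega
        omega
      · have : 1 * (N:ℤ) ≤ n * N := by gcongr; omega
        omega
    rw [hn0] at h2
    apply hjk; apply Fin.ext; omega
  have : ∀ i : Fin N, cn N ((i:ℕ) - (j:ℕ)) * cn N ((i:ℕ) - (k:ℕ)) = 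
     -1 + Real.cot (π * ((k:ℕ) - (j:ℕ)) / N) * (cn N ((i:ℕ) - (k:ℕ)) - cn N ((i:ℕ) - (j:ℕ))) := by
    intro i
    have e : π * ((k:ℕ) - (j:ℕ)) / N = π * ((((i:ℕ) - (j:ℕ) : ℤ) : ℝ) + 1 / 2) / N - π * ((((i:ℕ) - (k:ℕ) : ℤ) : ℝ) + 1 / 2) / N := by
      push_cast; ring
    rw [e] at hs ⊢
    exact cot_mul _ _ (sin_cn_ne N hN _) (sin_cn_ne N hN _) hs
  rw [Finset.sum_congr rfl fun i _ => this i, Finset.sum_add_distrib, ← Finset.mul_sum, Finset.sum_sub_distrib,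
    sum_cn_left, sum_cn_left]
  simp

lemma gram (N : ℕ) (j k : Fin N) :
    ∑ i : Fin N, cn N ((i:ℕ) - (j:ℕ)) * cn N ((i:ℕ) - (k:ℕ)) = -N + if j = k then (N:ℝ)^2 else 0 := by
  by_cases hjk : j = k
  · subst hjk
    have h0 : ∑ k : Fin N, ∑ i : Fin N, cn N ((i:ℕ) - (j:ℕ)) * cn N ((i:ℕ) - (k:ℕ)) = 0 := by
      rw [Finset.sum_comm]
      simp only [← Finset.mul_sum, sum_cn_right, mul_zero, Finset.sum_const_zero]
    rw [← Finset.add_sum_erase _ _ (Finset.mem_univ j)] at h0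
    rw [Finset.sum_congr rfl (fun k hk => gram_off N j k (Finset.ne_of_mem_erase hk).symm)] at h0
    have hN : 1 ≤ N := Fin.pos j
    simp only [Finset.sum_const, Finset.card_erase_of_mem (Finset.mem_univ j), Finset.card_univ, Fintype.card_fin, nsmul_eq_mul] at h0
    rw [Nat.cast_sub hN] at h0
    push_cast at h0
    simp only [if_true]
    linarith
  · simp [hjk, gram_off N j k hjk]

/-- discrete Hilbert transform -/
noncomputable def Hd {N : ℕ} (z : Fin N → ℝ) (i : Fin N) : ℝ := (N:ℝ)⁻¹ * ∑ j : Fin N, cn N ((i:ℕ) - (j:ℕ)) * z j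

lemma Hd_isom {N : ℕ} (hN : 0 < N) (z : Fin N → ℝ) :
    (N:ℝ)⁻¹ * ∑ i, z i ^ 2 = avg z ^ 2 + (N:ℝ)⁻¹ * ∑ i, Hd z i ^ 2 := by
  have hN' : (N:ℝ) ≠ 0 := by exact_mod_cast hN.ne'
  have h1 : ∑ i : Fin N, (∑ j : Fin N, cn N ((i:ℕ) - (j:ℕ)) * z j) ^ 2 = -N * (∑ i, z i) ^ 2 + N ^ 2 * ∑ i, z i ^ 2 := by
    have : ∀ i : Fin N, (∑ j : Fin N, cn N ((i:ℕ) - (j:ℕ)) * z j) ^ 2 =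
        ∑ j : Fin N, ∑ k : Fin N, z j * z k * (cn N ((i:ℕ) - (j:ℕ)) * cn N ((i:ℕ) - (k:ℕ))) := by
      intro i
      rw [sq, Finset.sum_mul_sum]
      refine Finset.sum_congr rfl fun j _ => Finset.sum_congr rfl fun k _ => by ring
    rw [Finset.sum_congr rfl fun i _ => this i, Finset.sum_comm]
    have h2 : ∀ j : Fin N, ∑ i : Fin N, ∑ k : Fin N, z j * z k * (cn N ((i:ℕ) - (j:ℕ)) * cn N ((i:ℕ) - (k:ℕ)))
        = -N * (z j * ∑ k, z k) + N ^ 2 * z j ^ 2 := by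
      intro j
      rw [Finset.sum_comm]
      simp only [← Finset.mul_sum, gram, mul_add, Finset.sum_add_distrib, mul_ite, mul_zero, Finset.sum_ite_eq, Finset.mem_univ, if_true]
      rw [← Finset.sum_mul, ← Finset.mul_sum]; ring
    rw [Finset.sum_congr rfl fun j _ => h2 j, Finset.sum_add_distrib, ← Finset.mul_sum, ← Finset.mul_sum, ← Finset.sum_mul]
    ring
  unfold Hd avg
  simp only [mul_pow, ← Finset.mul_sum, h1]
  field_simp
  ring

lemma l2norm_le_Hd {N : ℕ} (hN : 0 < N) (z : Fin N → ℝ) : l2norm z ≤ |avg z| + l2norm (Hd z) := by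
  unfold l2norm
  rw [Hd_isom hN]
  have hx : 0 ≤ (N:ℝ)⁻¹ * ∑ i, Hd z i ^ 2 := by positivity
  rw [Real.sqrt_le_left (by positivity)]
  have := Real.sq_sqrt hx
  have h1 := abs_nonneg (avg z)
  have h2 := Real.sqrt_nonneg ((N:ℝ)⁻¹ * ∑ i, Hd z i ^ 2)
  nlinarith [sq_abs (avg z)]

lemma abs_sin_sub_le (x y : ℝ) : |Real.sin x - Real.sin y| ≤ |x - y| := by
  have := Real.lipschitzWith_sin.dist_le_mul x y
  simpa [Real.dist_eq] using this

lemma cot_diff (x y a d : ℝ) (ha : 0 < a) (hy : a ≤ |Real.sin y|) (hd : |x - y| ≤ d) (hda : d ≤ a / 2) :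
    Real.sin x ≠ 0 ∧ |Real.cot x - Real.cot y| ≤ d / (a / 2 * a) := by
  have hx : a / 2 ≤ |Real.sin x| := by
    have h1 := abs_sin_sub_le x y
    have h2 := abs_sub_abs_le_abs_sub (Real.sin y) (Real.sin x)
    rw [abs_sub_comm] at h2
    linarith
  have hx0 : Real.sin x ≠ 0 := abs_pos.1 (by linarith)
  have hy0 : Real.sin y ≠ 0 := abs_pos.1 (by linarith)
  refine ⟨hx0, ?_⟩
  have : Real.cot x - Real.cot y = Real.sin (y - x) / (Real.sin x * Real.sin y) := by
    rw [Real.cot_eq_cos_div_sin, Real.cot_eq_cos_div_sin, Real.sin_sub]; field_simp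
  rw [this, abs_div, abs_mul]
  have h3 : |Real.sin (y - x)| ≤ d := by
    have := abs_sin_sub_le (y - x) 0
    simp only [Real.sin_zero, sub_zero] at this
    rw [abs_sub_comm] at hd; linarith
  have hd0 : 0 ≤ d := (abs_nonneg _).trans hd
  gcongr

lemma ec_ne_of_sin (L s t : ℝ) (h : Real.sin (π * (s - t) / L) ≠ 0) : ec L s ≠ ec L t := by
  intro h0
  have := norm_ec_sub L s t
  rw [h0, sub_self, norm_zero] at this
  have h2 := abs_pos.2 h
  linarith

lemma lip_K (L : ℝ) (K : ℝ × ℝ → ℝ) (hK : ContDiff ℝ 1 K) : ∃ Λ : ℝ, 0 ≤ Λ ∧ 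
    ∀ s ∈ Set.Icc 0 L, ∀ t ∈ Set.Icc 0 L, ∀ s' ∈ Set.Icc 0 L, ∀ t' ∈ Set.Icc 0 L, 
      |K (s, t) - K (s', t')| ≤ Λ * max |s - s'| |t - t'| := by
  have hc : Continuous (fderiv ℝ K) := hK.continuous_fderiv one_ne_zero
  obtain ⟨C, hC⟩ := ((isCompact_Icc (a := (0:ℝ)) (b := L)).prod (isCompact_Icc (a := (0:ℝ)) (b := L))).exists_bound_of_continuousOn
    hc.continuousOn
  refine ⟨max C 0, le_max_right _ _, ?_⟩
  intro s hs t ht s' hs' t' ht'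
  have := ((convex_Icc (0:ℝ) L).prod (convex_Icc (0:ℝ) L)).norm_image_sub_le_of_norm_fderiv_le (𝕜 := ℝ) (f := K) (C := max C 0)
    (fun x _ => hK.differentiable one_ne_zero x) (fun x hx => (hC x hx).trans (le_max_left _ _))
    (Set.mk_mem_prod hs' ht') (Set.mk_mem_prod hs ht)
  simpa [Prod.norm_def] using this

/-- uniform source nodes and midpoints -/
noncomputable def tU (L : ℝ) (N : ℕ) (j : Fin N) : ℝ := (j : ℕ) * L / N
noncomputable def sU (L : ℝ) (N : ℕ) (i : Fin N) : ℝ := ((i : ℕ) + 1 / 2) * L / N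

lemma tU_mem (L : ℝ) (hL : 0 < L) (N : ℕ) (j : Fin N) : tU L N j ∈ Set.Icc (j.val * (L / N)) ((j.val + 1) * (L / N)) := by
  have hN : (0:ℝ) < N := by exact_mod_cast Fin.pos j
  unfold tU
  rw [mul_div_assoc]
  constructor
  · rfl
  · gcongr; linarith

lemma sU_mem (L : ℝ) (hL : 0 < L) (N : ℕ) (j : Fin N) : sU L N j ∈ Set.Icc (j.val * (L / N)) ((j.val + 1) * (L / N)) := by
  have hN : (0:ℝ) < N := by exact_mod_cast Fin.pos j
  unfold sU
  rw [mul_div_assoc]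
  constructor <;> gcongr <;> linarith

lemma cell_sub (L : ℝ) (hL : 0 < L) (N : ℕ) (j : Fin N) :
    Set.Icc (j.val * (L / N)) ((j.val + 1) * (L / N)) ⊆ Set.Icc 0 L := by
  have hN : (0:ℝ) < N := by exact_mod_cast Fin.pos j
  have hj : ((j:ℕ):ℝ) + 1 ≤ N := by exact_mod_cast j.2
  apply Set.Icc_subset_Icc
  · positivity
  · calc (((j:ℕ):ℝ) + 1) * (L / N) ≤ N * (L / N) := by gcongr
      _ = L := by field_simp

lemma arg_U (L : ℝ) (hL : 0 < L) (N : ℕ) (i j : Fin N) : 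
    π * (sU L N i - tU L N j) / L = π * ((((i:ℕ) - (j:ℕ) : ℤ) : ℝ) + 1 / 2) / N := by
  have hN : (N:ℝ) ≠ 0 := by exact_mod_cast (Fin.pos j).ne'
  unfold sU tU
  push_cast; field_simp; ring

lemma ec_U_ne (L : ℝ) (hL : 0 < L) (N : ℕ) (i j : Fin N) : ec L (sU L N i) ≠ ec L (tU L N j) := by
  apply ec_ne_of_sin
  rw [arg_U L hL]
  exact sin_cn_ne N (Fin.pos j) _

lemma beta_U (L : ℝ) (hL : 0 < L) (l : ℝ → ℂ) (K : ℝ × ℝ → ℝ) 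
    (hK : ∀ s t, ec L s ≠ ec L t → beta l s t = π / L * Real.cot (π * (s - t) / L) + K (s, t))
    (N : ℕ) (i j : Fin N) : L / N * beta l (sU L N i) (tU L N j) = 
     π / N * cn N ((i:ℕ) - (j:ℕ)) + L / N * K (sU L N i, tU L N j) := by
  rw [hK _ _ (ec_U_ne L hL N i j), arg_U L hL]
  have hN : (N:ℝ) ≠ 0 := by exact_mod_cast (Fin.pos j).ne'
  unfold cn
  field_simp

lemma R_bound (L : ℝ) (hL : 0 < L) (l : ℝ → ℂ) (K : ℝ × ℝ → ℝ) (hKC : ContDiff ℝ 1 K)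
    (hK : ∀ s t, ec L s ≠ ec L t → beta l s t = π / L * Real.cot (π * (s - t) / L) + K (s, t))
    (κ : ℕ) (hκ : 2 ≤ κ) (M : ℝ) (hM : 0 < M)
    (ms mst : (N : ℕ) → Fin N → ℝ)
    (hms : ∀ N, 2 ≤ N → ∀ i : Fin N, ms N i ∈ Set.Ico (0:ℝ) L ∧
      |ms N i - ((i : ℕ) : ℝ) * L / (N : ℝ)| ≤ M / (N : ℝ) ^ (κ + 1))
    (hmst : ∀ N, 2 ≤ N → ∀ i : Fin N, mst N i ∈ Set.Ico (0:ℝ) L ∧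
      |mst N i - (((i : ℕ) : ℝ) + 1/2) * L / (N : ℝ)| ≤ M / (N : ℝ) ^ (κ + 1)) :
    ∃ C : ℝ, 0 ≤ C ∧ ∃ N₁ : ℕ, 2 ≤ N₁ ∧ ∀ N, N₁ ≤ N → ∀ i j : Fin N, 
      |L / N * beta l (mst N i) (ms N j) - (π / N * cn N ((i:ℕ) - (j:ℕ)) + L / N * K (sU L N i, tU L N j))| ≤ C / N ^ 2 := by
  obtain ⟨Λ, hΛ0, hΛ⟩ := lip_K L K hKC
  have hpi := Real.pi_pos
  set c := π / L * (2 * M) with hc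
  have hc0 : 0 < c := by positivity
  refine ⟨π * (2 * c) + L * (Λ * M), by positivity, max 2 ⌈2 * c⌉₊, le_max_left _ _, ?_⟩
  intro N hN i j
  have hN2 : 2 ≤ N := (le_max_left _ _).trans hN
  have hNc : 2 * c ≤ N := (Nat.le_ceil _).trans (by exact_mod_cast (le_max_right _ _).trans hN)
  have hN2' : (2:ℝ) ≤ N := by exact_mod_cast hN2
  have hN0 : (0:ℝ) < N := by linarith
  obtain ⟨hb, hb'⟩ := hms N hN2 j
  obtain ⟨ha, ha'⟩ := hmst N hN2 i
  have hpow : M / (N:ℝ) ^ (κ + 1) ≤ M / N ^ 3 := by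
    gcongr
    · linarith
    · omega
  have ha2 : |mst N i - sU L N i| ≤ M / N ^ 3 := ha'.trans hpow
  have hb2 : |ms N j - tU L N j| ≤ M / N ^ 3 := hb'.trans hpow
  have hxy : |π * (mst N i - ms N j) / L - π * (sU L N i - tU L N j) / L| ≤ c / N ^ 3 := by
    have : π * (mst N i - ms N j) / L - π * (sU L N i - tU L N j) / L = π / L * ((mst N i - sU L N i) - (ms N j - tU L N j)) := by ring
    rw [this, abs_mul, abs_of_pos (by positivity : 0 < π / L)]
    calc π / L * |(mst N i - sU L N i) - (ms N j - tU L N j)| ≤ π / L * (M / N ^ 3 + M / N ^ 3) := by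
          gcongr; exact (abs_sub _ _).trans (add_le_add ha2 hb2)
      _ = c / N ^ 3 := by rw [hc]; ring
  have hsin : 1 / (N:ℝ) ≤ |Real.sin (π * (sU L N i - tU L N j) / L)| := by
    rw [arg_U L hL]; exact sin_lower N (by omega) _
  have hd : c / (N:ℝ) ^ 3 ≤ 1 / N / 2 := by
    rw [div_div, div_le_div_iff₀ (by positivity) (by positivity)]
    have : (N:ℝ) ≤ N ^ 2 := by nlinarith
    nlinarith
  obtain ⟨h1, h2⟩ := cot_diff _ _ _ _ (by positivity) hsin hxy hd
  rw [← beta_U L hL l K hK, hK _ _ (ec_U_ne L hL N i j), hK _ _ (ec_ne_of_sin _ _ _ h1)]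
  have hKd := hΛ _ ⟨ha.1, ha.2.le⟩ _ ⟨hb.1, hb.2.le⟩ _ (cell_sub L hL N i (sU_mem L hL N i)) _ (cell_sub L hL N j (tU_mem L hL N j))
  have hKd2 : |K (mst N i, ms N j) - K (sU L N i, tU L N j)| ≤ Λ * (M / N ^ 3) :=
    hKd.trans (by gcongr; exact max_le ha2 hb2)
  set x := π * (mst N i - ms N j) / L
  set y := π * (sU L N i - tU L N j) / L
  have e : L / N * (π / L * Real.cot x + K (mst N i, ms N j)) - L / N * (π / L * Real.cot y + K (sU L N i, tU L N j)) = 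
     π / N * (Real.cot x - Real.cot y) + L / N * (K (mst N i, ms N j) - K (sU L N i, tU L N j)) := by
    field_simp; ring
  rw [e]
  calc _ ≤ π / N * |Real.cot x - Real.cot y| + L / N * |K (mst N i, ms N j) - K (sU L N i, tU L N j)| := by
        refine (abs_add_le _ _).trans (le_of_eq ?_)
        rw [abs_mul, abs_mul, abs_of_pos (by positivity : 0 < π / N), abs_of_pos (by positivity : 0 < L / N)]
    _ ≤ π / N * (c / N ^ 3 / (1 / N / 2 * (1 / N))) + L / N * (Λ * (M / N ^ 3)) := by gcongr
    _ = π * (2 * c) / N ^ 2 + L * (Λ * M) / N ^ 4 := by field_simp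
    _ ≤ π * (2 * c) / N ^ 2 + L * (Λ * M) / N ^ 2 := by 
        gcongr 
        · linarith
        · norm_num
    _ = _ := by ring

/-- Riemann sums with a modulus of continuity. -/
lemma riemann (L : ℝ) (hL : 0 < L) (N : ℕ) (hN : 0 < N) (F : ℝ → ℝ) (hF : Continuous F) (ε : ℝ)
    (hε : ∀ x ∈ Set.Icc 0 L, ∀ y ∈ Set.Icc 0 L, |x - y| ≤ L / N → |F x - F y| ≤ ε)
    (x : Fin N → ℝ) (hx : ∀ i : Fin N, x i ∈ Set.Icc (i.val * (L / N)) ((i.val + 1) * (L / N))) :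
    |L / N * ∑ i, F (x i) - ∫ s in (0:ℝ)..L, F s| ≤ L * ε := by
  have hN0 : (0:ℝ) < N := by exact_mod_cast hN
  have hsum := intervalIntegral.sum_integral_adjacent_intervals (f := F) (μ := volume) (a := fun k : ℕ => (k:ℝ) * (L / N)) (n := N)
    (fun k _ => hF.intervalIntegrable _ _)
  have e1 : (N:ℝ) * (L / N) = L := by field_simp
  simp only [Nat.cast_zero, zero_mul, e1] at hsum
  rw [← hsum, ← Fin.sum_univ_eq_sum_range (fun k : ℕ => ∫ x in ((k:ℝ) * (L / N))..(((k+1:ℕ):ℝ) * (L / N)), F x), Finset.mul_sum, ← Finset.sum_sub_distrib]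
  have hb : ∀ i : Fin N, |L / N * F (x i) - ∫ s in (((i:ℕ):ℝ) * (L / N))..((((i:ℕ)+1:ℕ):ℝ) * (L / N)), F s| ≤ L / N * ε := by
    intro i
    have hlen : (((i:ℕ)+1:ℕ):ℝ) * (L / N) - ((i:ℕ):ℝ) * (L / N) = L / N := by push_cast; ring
    have e2 : L / N * F (x i) = ∫ s in (((i:ℕ):ℝ) * (L / N))..((((i:ℕ)+1:ℕ):ℝ) * (L / N)), F (x i) := by
      rw [intervalIntegral.integral_const, hlen, smul_eq_mul]
    rw [e2, ← intervalIntegral.integral_sub (by simp) (hF.intervalIntegrable _ _)]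
    have hle : ((i:ℕ):ℝ) * (L / N) ≤ (((i:ℕ)+1:ℕ):ℝ) * (L / N) := by gcongr; simp
    have := intervalIntegral.norm_integral_le_of_norm_le_const (C := ε) (f := fun s => F (x i) - F s)
      (a := ((i:ℕ):ℝ) * (L / N)) (b := (((i:ℕ)+1:ℕ):ℝ) * (L / N)) ?_
    · rw [hlen, abs_of_pos (by positivity), Real.norm_eq_abs] at this
      linarith
    · intro s hs
      rw [Set.uIoc_of_le hle] at hs
      have hx' := hx i
      have hs' : s ∈ Set.Icc (i.val * (L / N)) ((i.val + 1) * (L / N)) := by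
        refine ⟨hs.1.le, ?_⟩; have := hs.2; push_cast at this; exact this
      apply hε _ (cell_sub L hL N i hx') _ (cell_sub L hL N i hs')
      rw [abs_le]
      constructor <;> nlinarith [hx'.1, hx'.2, hs'.1, hs'.2]
  calc _ ≤ ∑ i : Fin N, |L / N * F (x i) - ∫ s in (((i:ℕ):ℝ) * (L / N))..((((i:ℕ)+1:ℕ):ℝ) * (L / N)), F s| := Finset.abs_sum_le_sum_abs _ _
    _ ≤ ∑ i : Fin N, L / N * ε := Finset.sum_le_sum fun i _ => hb i
    _ = L * ε := by simp; field_simp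

/-- Lebesgue measure on one period. -/
noncomputable abbrev muL (L : ℝ) : Measure ℝ := volume.restrict (Set.Ioc 0 L)

lemma test_zero (L : ℝ) [hF : Fact (0 < L)] (h : ℝ → ℝ) (hi : Integrable h (muL L))
    (H : ∀ g : C(AddCircle L, ℝ), ∫ t, h t * g (t : AddCircle L) ∂(muL L) = 0) :
    h =ᵐ[muL L] 0 := by
  have hL : 0 < L := hF.out
  have hmu : muL L = volume.restrict (Set.Ioo 0 L) := Measure.restrict_congr_set Ioo_ae_eq_Ioc.symm
  have key := IsOpen.ae_eq_zero_of_integral_contDiff_smul_eq_zero (f := h) (μ := volume) (U := Set.Ioo 0 L) isOpen_Ioo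
    (IntegrableOn.locallyIntegrableOn (by rw [hmu] at hi; exact hi)) ?_
  · rw [hmu]
    exact (ae_restrict_iff' measurableSet_Ioo).2 key
  · intro g hg _ hs
    have g0 : ∀ x, x ∉ Set.Ioo 0 L → g x = 0 := fun x hx => by
      by_contra hne
      exact hx (hs (subset_tsupport g hne))
    have hc : Continuous (AddCircle.liftIco L 0 g) := by
      apply AddCircle.liftIco_continuous
      · rw [g0 0 (by simp), g0 (0 + L) (by simp)]
      · exact hg.continuous.continuousOn
    have := H ⟨_, hc⟩
    rw [hmu] at this
    rw [← this, ← integral_indicator measurableSet_Ioo]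
    apply integral_congr_ae
    refine Filter.Eventually.of_forall fun x => ?_
    by_cases hx : x ∈ Set.Ioo 0 L
    · simp only [Set.indicator_of_mem hx, ContinuousMap.coe_mk]
      rw [AddCircle.liftIco_coe_apply ⟨hx.1.le, by simpa using hx.2⟩, smul_eq_mul, mul_comm]
    · simp only [Set.indicator_of_notMem hx, g0 x hx, zero_smul]

lemma test_moments (L : ℝ) [hF : Fact (0 < L)] (l : ℝ → ℂ) (hc : Continuous l) (hper : ∀ s, l (s + L) = l s)
    (hinj : Set.InjOn l (Set.Ico 0 L)) (h : ℝ → ℝ) (hi : Integrable h (muL L))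
    (H : ∀ m n : ℕ, ∫ t, h t * ((l t).re ^ m * (l t).im ^ n) ∂(muL L) = 0) :
    h =ᵐ[muL L] 0 := by
  have hL : 0 < L := hF.out
  apply test_zero L h hi
  have hP : Function.Periodic l L := hper
  have hlc : Continuous hP.lift := continuous_coinduced_dom.mpr hc
  let x : C(AddCircle L, ℝ) := ⟨fun p => (hP.lift p).re, Complex.continuous_re.comp hlc⟩
  let y : C(AddCircle L, ℝ) := ⟨fun p => (hP.lift p).im, Complex.continuous_im.comp hlc⟩
  have hintg : ∀ g : C(AddCircle L, ℝ), Integrable (fun t => h t * g (t : AddCircle L)) (muL L) := fun g => by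
    apply hi.mul_bdd (c := ‖g‖)
    · exact (g.continuous.comp (AddCircle.continuous_mk' L)).aestronglyMeasurable
    · exact Filter.Eventually.of_forall fun t => g.norm_coe_le_norm _
  let Λ : C(AddCircle L, ℝ) →ₗ[ℝ] ℝ := 
    { toFun := fun g => ∫ t, h t * g (t : AddCircle L) ∂(muL L)
      map_add' := fun f g => by
        simp only [ContinuousMap.add_apply, mul_add]
        exact integral_add (hintg f) (hintg g)
      map_smul' := fun c g => by
        simp only [ContinuousMap.smul_apply, smul_eq_mul, RingHom.id_apply]
        rw [← integral_const_mul]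
        congr 1; ext t; ring }
  have hΛb : ∀ g, ‖Λ g‖ ≤ (∫ t, ‖h t‖ ∂(muL L)) * ‖g‖ := fun g => by
    show ‖∫ t, h t * g (t : AddCircle L) ∂(muL L)‖ ≤ _
    rw [← integral_mul_const]
    apply norm_integral_le_of_norm_le (hi.norm.mul_const _)
    refine Filter.Eventually.of_forall fun t => ?_
    rw [norm_mul]
    gcongr
    exact g.norm_coe_le_norm _
  have hΛc : Continuous Λ := (Λ.mkContinuous _ hΛb).continuous
  let A := Algebra.adjoin ℝ ({x, y} : Set C(AddCircle L, ℝ))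
  have hA : ∀ g ∈ A, Λ g = 0 := by
    have h1 : Subalgebra.toSubmodule A ≤ LinearMap.ker Λ := by
      rw [Algebra.adjoin_eq_span, Submodule.span_le]
      intro g hg
      obtain ⟨m, n, rfl⟩ := (Submonoid.mem_closure_pair _ _ _).1 hg
      exact H m n
    intro g hg
    exact h1 hg
  have hsep : A.SeparatesPoints := by
    intro p q hpq
    obtain ⟨s, hs, rfl⟩ := AddCircle.coe_image_Ico_eq (p := L) 0 ▸ Set.mem_univ p
    obtain ⟨t, ht, rfl⟩ := AddCircle.coe_image_Ico_eq (p := L) 0 ▸ Set.mem_univ q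
    rw [zero_add] at hs ht
    have hne : l s ≠ l t := fun e => hpq (by rw [hinj hs ht e])
    by_cases hre : (l s).re = (l t).re
    · refine ⟨y, ⟨y, Algebra.subset_adjoin (by simp), rfl⟩, ?_⟩
      intro him
      exact hne (Complex.ext hre him)
    · exact ⟨x, ⟨x, Algebra.subset_adjoin (by simp), rfl⟩, hre⟩
  have htop := ContinuousMap.subalgebra_topologicalClosure_eq_top_of_separatesPoints A hsep
  intro g
  have hg : g ∈ A.topologicalClosure := by rw [htop]; trivial
  have hcl : closure (A : Set C(AddCircle L, ℝ)) ⊆ {g | Λ g = 0} := 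
    closure_minimal hA (isClosed_eq hΛc continuous_const)
  exact hcl hg

/-- Gaussian quadratic form: nonnegativity and definiteness. -/
lemma gauss_pos (L : ℝ) [hF : Fact (0 < L)] (l : ℝ → ℂ) (hc : Continuous l) (hper : ∀ s, l (s + L) = l s)
    (hinj : Set.InjOn l (Set.Ico 0 L)) (ζ : ℝ → ℝ) (hi : Integrable ζ (muL L)) (a : ℝ) (ha : 0 < a) :
    0 ≤ ∫ p : ℝ × ℝ, ζ p.1 * ζ p.2 * Real.exp (-a * ‖l p.2 - l p.1‖ ^ 2) ∂((muL L).prod (muL L)) ∧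
    ((∫ p : ℝ × ℝ, ζ p.1 * ζ p.2 * Real.exp (-a * ‖l p.2 - l p.1‖ ^ 2) ∂((muL L).prod (muL L))) = 0 →
      ζ =ᵐ[muL L] 0) := by
  have hL : 0 < L := hF.out
  have hcr : Continuous fun t => (l t).re := Complex.continuous_re.comp hc
  have hci : Continuous fun t => (l t).im := Complex.continuous_im.comp hc
  obtain ⟨D, hD⟩ := (isCompact_Icc (a := (0:ℝ)) (b := L)).exists_bound_of_continuousOn hc.continuousOn
  have hD0 : 0 ≤ D := (norm_nonneg _).trans (hD 0 ⟨le_rfl, hL.le⟩)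
  have hmem : ∀ᵐ t ∂(muL L), t ∈ Set.Icc 0 L := by
    filter_upwards [ae_restrict_mem measurableSet_Ioc] with t ht using ⟨ht.1.le, ht.2⟩
  set w : ℝ → ℝ := fun t => ζ t * Real.exp (-a * ‖l t‖ ^ 2) with hw
  have hwi : Integrable w (muL L) := by
    apply hi.mul_bdd (c := 1)
    · exact (by fun_prop : Continuous fun t => Real.exp (-a * ‖l t‖ ^ 2)).aestronglyMeasurable
    · refine Filter.Eventually.of_forall fun t => ?_
      rw [Real.norm_eq_abs, Real.abs_exp, Real.exp_le_one_iff]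
      nlinarith [sq_nonneg ‖l t‖]
  have hmono : ∀ m n : ℕ, Integrable (fun t => w t * ((l t).re ^ m * (l t).im ^ n)) (muL L) := fun m n => by
    apply hwi.mul_bdd (c := D ^ m * D ^ n)
    · exact (by fun_prop : Continuous fun t => ((l t).re ^ m * (l t).im ^ n)).aestronglyMeasurable
    · filter_upwards [hmem] with t ht
      rw [norm_mul, norm_pow, norm_pow]
      have h1 := (Complex.abs_re_le_norm (l t)).trans (hD t ht)
      have h2 := (Complex.abs_im_le_norm (l t)).trans (hD t ht)
      gcongr <;> assumption
  let d : ℝ × ℝ → ℝ := fun p => (l p.1).re * (l p.2).re + (l p.1).im * (l p.2).im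
  let F : ℕ → ℝ × ℝ → ℝ := fun n p => w p.1 * w p.2 * ((2 * a * d p) ^ n / n.factorial)
  let Mo : ℕ → ℕ → ℝ := fun m n => ∫ t, w t * ((l t).re ^ m * (l t).im ^ n) ∂(muL L)
  have hdb : ∀ᵐ p ∂((muL L).prod (muL L)), |d p| ≤ 2 * D ^ 2 := by
    have h1 : ∀ᵐ p ∂((muL L).prod (muL L)), p.1 ∈ Set.Icc 0 L := Measure.quasiMeasurePreserving_fst.ae hmem
    have h2 : ∀ᵐ p ∂((muL L).prod (muL L)), p.2 ∈ Set.Icc 0 L := Measure.quasiMeasurePreserving_snd.ae hmem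
    filter_upwards [h1, h2] with p h1 h2
    have a1 := (Complex.abs_re_le_norm (l p.1)).trans (hD _ h1)
    have a2 := (Complex.abs_im_le_norm (l p.1)).trans (hD _ h1)
    have b1 := (Complex.abs_re_le_norm (l p.2)).trans (hD _ h2)
    have b2 := (Complex.abs_im_le_norm (l p.2)).trans (hD _ h2)
    calc |d p| ≤ |(l p.1).re| * |(l p.2).re| + |(l p.1).im| * |(l p.2).im| := by
          rw [← abs_mul, ← abs_mul]; exact abs_add_le _ _
      _ ≤ D * D + D * D := by gcongr
      _ = _ := by ring
  have hww : Integrable (fun p : ℝ × ℝ => w p.1 * w p.2) ((muL L).prod (muL L)) := hwi.mul_prod hwi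
  have hFn : ∀ n, ∀ᵐ p ∂((muL L).prod (muL L)), ‖(2 * a * d p) ^ n / (n.factorial : ℝ)‖ ≤ (2 * a * (2 * D ^ 2)) ^ n / n.factorial := fun n => by
    filter_upwards [hdb] with p hp
    rw [norm_div, norm_pow, norm_mul, Real.norm_eq_abs, Real.norm_eq_abs, abs_of_pos (by positivity : 0 < 2 * a), Real.norm_natCast]
    gcongr
  have hdc : Continuous d := by fun_prop
  have hFi : ∀ n, Integrable (F n) ((muL L).prod (muL L)) := fun n => by
    apply hww.mul_bdd (c := (2 * a * (2 * D ^ 2)) ^ n / n.factorial) _ (hFn n)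
    exact (by fun_prop : Continuous fun p => (2 * a * d p) ^ n / (n.factorial : ℝ)).aestronglyMeasurable
  have hFs : Summable fun n => ∫ p, ‖F n p‖ ∂((muL L).prod (muL L)) := by
    refine Summable.of_nonneg_of_le (fun n => integral_nonneg fun p => norm_nonneg _) (fun n => ?_)
      ((Real.summable_pow_div_factorial (2 * a * (2 * D ^ 2))).mul_left (∫ p : ℝ × ℝ, ‖w p.1 * w p.2‖ ∂((muL L).prod (muL L))))
    rw [← integral_mul_const]
    apply integral_mono_ae (hFi n).norm (hww.norm.mul_const _)
    filter_upwards [hFn n] with p hp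
    show ‖w p.1 * w p.2 * _‖ ≤ _
    rw [norm_mul]
    gcongr
  have hsum := hasSum_integral_of_summable_integral_norm hFi hFs
  have e1 : ∫ p, ∑' n, F n p ∂((muL L).prod (muL L)) = ∫ p : ℝ × ℝ, ζ p.1 * ζ p.2 * Real.exp (-a * ‖l p.2 - l p.1‖ ^ 2) ∂((muL L).prod (muL L)) := by
    congr 1; ext p
    have : HasSum (fun n => F n p) (w p.1 * w p.2 * Real.exp (2 * a * d p)) := by
      have := NormedSpace.expSeries_div_hasSum_exp (2 * a * d p)
      rw [← Real.exp_eq_exp_ℝ] at this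
      exact this.mul_left _
    rw [this.tsum_eq]
    have e : -a * ‖l p.2 - l p.1‖ ^ 2 = -a * ‖l p.1‖ ^ 2 + -a * ‖l p.2‖ ^ 2 + 2 * a * d p := by
      simp only [← Complex.normSq_eq_norm_sq, Complex.normSq_apply, Complex.sub_re, Complex.sub_im, d]
      ring
    rw [e, Real.exp_add, Real.exp_add]
    simp only [hw]; ring
  rw [e1] at hsum
  have e2 : ∀ n, ∫ p, F n p ∂((muL L).prod (muL L)) = (2 * a) ^ n / n.factorial * ∑ k ∈ Finset.range (n + 1), n.choose k * Mo k (n - k) ^ 2 := by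
    intro n
    have : F n = fun p => ∑ k ∈ Finset.range (n + 1), ((2 * a) ^ n / n.factorial * n.choose k) * ((w p.1 * ((l p.1).re ^ k * (l p.1).im ^ (n - k))) * (w p.2 * ((l p.2).re ^ k * (l p.2).im ^ (n - k)))) := by
      ext p
      simp only [F, d]
      rw [mul_pow, add_pow, mul_div_right_comm, ← mul_assoc, Finset.mul_sum]
      refine Finset.sum_congr rfl fun k _ => ?_
      rw [mul_pow, mul_pow]; ring
    rw [this, integral_finset_sum _ (fun k _ => ((hmono k (n-k)).mul_prod (hmono k (n-k))).const_mul _), Finset.mul_sum]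
    refine Finset.sum_congr rfl fun k _ => ?_
    rw [integral_const_mul, integral_prod_mul (fun t => w t * ((l t).re ^ k * (l t).im ^ (n - k))) (fun t => w t * ((l t).re ^ k * (l t).im ^ (n - k)))]
    simp only [Mo]; ring
  have hpos : ∀ n, 0 ≤ ∫ p, F n p ∂((muL L).prod (muL L)) := fun n => by
    rw [e2]
    exact mul_nonneg (by positivity) (Finset.sum_nonneg fun k _ => by positivity)
  refine ⟨hsum.nonneg hpos, fun h0 => ?_⟩
  rw [h0] at hsum
  have hz : ∀ n, ∫ p, F n p ∂((muL L).prod (muL L)) = 0 := by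
    have := (hasSum_zero_iff_of_nonneg hpos).1 hsum
    exact fun n => congrFun this n
  have hM : ∀ m n, Mo m n = 0 := by
    intro m n
    have h1 := hz (m + n)
    rw [e2] at h1
    have h2 := (mul_eq_zero.1 h1).resolve_left (by positivity)
    have h3 := (Finset.sum_eq_zero_iff_of_nonneg (fun k _ => by positivity)).1 h2 m (by simp)
    rw [Nat.add_sub_cancel_left] at h3
    have h4 : ((m + n).choose m : ℝ) ≠ 0 := by exact_mod_cast (Nat.choose_pos (Nat.le_add_right m n)).ne'
    exact pow_eq_zero_iff (two_ne_zero) |>.1 ((mul_eq_zero.1 h3).resolve_left h4)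
  have := test_moments L l hc hper hinj w hwi hM
  filter_upwards [this] with t ht
  exact (mul_eq_zero.1 ht).resolve_right (Real.exp_pos _).ne'

/-- The regularized heat kernel; argument `(a, (t, s))`. -/
noncomputable def kk (l : ℝ → ℂ) (q : ℝ × (ℝ × ℝ)) : ℝ :=
  (Real.exp (-q.1 * ‖l q.2.2 - l q.2.1‖ ^ 2) - if q.1 ≤ 1 then 1 else 0) / (2 * q.1)

lemma kk_symm (l : ℝ → ℂ) (a t s : ℝ) : kk l (a, (t, s)) = kk l (a, (s, t)) := by
  simp only [kk, norm_sub_rev]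

lemma kk_meas (l : ℝ → ℂ) (hc : Continuous l) : Measurable (kk l) := by
  unfold kk
  apply Measurable.div
  · apply Measurable.sub
    · exact (by fun_prop : Continuous fun q : ℝ × (ℝ × ℝ) => Real.exp (-q.1 * ‖l q.2.2 - l q.2.1‖ ^ 2)).measurable
    · exact Measurable.ite (measurableSet_le measurable_fst measurable_const) measurable_const measurable_const
  · fun_prop

lemma exp_bd (a x : ℝ) (ha : 0 < a) : |Real.exp (-a * x ^ 2)| ≤ 1 := by
  rw [Real.abs_exp, Real.exp_le_one_iff]; nlinarith [sq_nonneg x]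

lemma kk_bd (l : ℝ → ℂ) (a t s : ℝ) (ha : 0 < a) : |kk l (a, (t, s))| ≤ 1 / (2 * a) := by
  unfold kk
  rw [abs_div, abs_of_pos (by positivity : 0 < 2 * a)]
  gcongr
  have h1 := exp_bd a ‖l s - l t‖ ha
  have h2 := Real.exp_pos (-a * ‖l s - l t‖ ^ 2)
  rw [abs_le] at h1 ⊢
  simp only
  split_ifs <;> constructor <;> linarith

lemma gauss_int (L : ℝ) (hL : 0 < L) (l : ℝ → ℂ) (hc : Continuous l) (hper : ∀ s, l (s + L) = l s)
    (c : ℝ) (hc0 : 0 < c) (hch : ∀ s ∈ Set.Icc 0 L, ∀ t, |s - t| ≤ L / 2 → c * |s - t| ≤ ‖l s - l t‖)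
    (t : ℝ) (ht : t ∈ Set.Icc 0 L) (a : ℝ) (ha : 0 < a) :
    ∫ s, Real.exp (-a * ‖l s - l t‖ ^ 2) ∂(muL L) ≤ Real.sqrt (π / c ^ 2) * a ^ (-(1/2) : ℝ) := by
  rw [← intervalIntegral.integral_of_le hL.le]
  have hp : Function.Periodic (fun s => Real.exp (-a * ‖l s - l t‖ ^ 2)) L := fun s => by simp only [hper]
  have e := hp.intervalIntegral_add_eq 0 (t - L / 2)
  rw [zero_add] at e
  rw [e, intervalIntegral.integral_of_le (by linarith)]
  have hg : Integrable (fun s => Real.exp (-(a * c ^ 2) * (s - t) ^ 2)) := 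
    (integrable_exp_neg_mul_sq (by positivity : 0 < a * c ^ 2)).comp_sub_right t
  calc ∫ s in Set.Ioc (t - L / 2) (t - L / 2 + L), Real.exp (-a * ‖l s - l t‖ ^ 2) 
      ≤ ∫ s in Set.Ioc (t - L / 2) (t - L / 2 + L), Real.exp (-(a * c ^ 2) * (s - t) ^ 2) := by
        apply setIntegral_mono_on _ hg.integrableOn measurableSet_Ioc
        · intro s hs
          apply Real.exp_le_exp.2
          have h1 := hch t ht s (by rw [abs_le]; constructor <;> linarith [hs.1, hs.2])
          rw [norm_sub_rev] at h1
          have h2 : (c * |t - s|) ^ 2 ≤ ‖l s - l t‖ ^ 2 := by gcongr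
          rw [mul_pow, sq_abs] at h2
          nlinarith
        · apply Continuous.integrableOn_Ioc; fun_prop
    _ ≤ ∫ s, Real.exp (-(a * c ^ 2) * (s - t) ^ 2) := 
        setIntegral_le_integral hg (Filter.Eventually.of_forall fun s => (Real.exp_pos _).le)
    _ = Real.sqrt (π / (a * c ^ 2)) := by
        rw [integral_sub_right_eq_self (fun s => Real.exp (-(a * c ^ 2) * s ^ 2)) t, integral_gaussian]
    _ = _ := by
        rw [Real.rpow_neg ha.le, ← Real.sqrt_eq_rpow, ← Real.sqrt_inv, ← Real.sqrt_mul (by positivity)]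
        congr 1; field_simp

lemma kk_sec (L : ℝ) (hL : 0 < L) (l : ℝ → ℂ) (hc : Continuous l) (hper : ∀ s, l (s + L) = l s)
    (c : ℝ) (hc0 : 0 < c) (hch : ∀ s ∈ Set.Icc 0 L, ∀ t, |s - t| ≤ L / 2 → c * |s - t| ≤ ‖l s - l t‖) :
    ∃ W : ℝ → ℝ, Integrable W (volume.restrict (Set.Ioi 0)) ∧ ∀ t ∈ Set.Icc 0 L, ∀ a > 0,
      ∫ s, |kk l (a, (t, s))| ∂(muL L) ≤ W a := by
  obtain ⟨D, hD⟩ := (isCompact_Icc (a := (0:ℝ)) (b := L)).exists_bound_of_continuousOn hc.continuousOn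
  have hD0 : 0 ≤ D := (norm_nonneg _).trans (hD 0 ⟨le_rfl, hL.le⟩)
  refine ⟨fun a => if a ≤ 1 then L * (2 * D) ^ 2 else Real.sqrt (π / c ^ 2) * a ^ (-(3/2) : ℝ), ?_, ?_⟩
  · have hU : Set.Ioi (0:ℝ) = Set.Ioc 0 1 ∪ Set.Ioi 1 := (Set.Ioc_union_Ioi_eq_Ioi zero_le_one).symm
    show IntegrableOn _ _ _
    rw [hU]
    apply IntegrableOn.union
    · refine IntegrableOn.congr_fun (f := fun _ => L * (2 * D) ^ 2) ?_ ?_ measurableSet_Ioc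
      · exact integrableOn_const (by simp)
      · intro a ha; simp [ha.2]
    · refine IntegrableOn.congr_fun (f := fun a => Real.sqrt (π / c ^ 2) * a ^ (-(3/2) : ℝ)) ?_ ?_ measurableSet_Ioi
      · exact (integrableOn_Ioi_rpow_of_lt (by norm_num) zero_lt_one).const_mul _
      · intro a ha; simp [not_le.2 (Set.mem_Ioi.1 ha)]
  · intro t ht a ha
    by_cases h1 : a ≤ 1
    · simp only [h1, if_true]
      have hb : ∀ s ∈ Set.Ioc 0 L, |kk l (a, (t, s))| ≤ (2 * D) ^ 2 := by
        intro s hs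
        simp only [kk, h1, if_true]
        rw [abs_div, abs_of_pos (by positivity : 0 < 2 * a), div_le_iff₀ (by positivity)]
        have h2 := Real.add_one_le_exp (-a * ‖l s - l t‖ ^ 2)
        have h3 := exp_bd a ‖l s - l t‖ ha
        have h4 : ‖l s - l t‖ ≤ 2 * D := (norm_sub_le _ _).trans (by linarith [hD s ⟨hs.1.le, hs.2⟩, hD t ht])
        have h5 : ‖l s - l t‖ ^ 2 ≤ (2 * D) ^ 2 := by gcongr
        rw [abs_le] at h3 ⊢
        constructor <;> nlinarith
      have := norm_setIntegral_le_of_norm_le_const (μ := volume) (s := Set.Ioc 0 L) (f := fun s => |kk l (a, (t, s))|) (C := (2 * D) ^ 2) (by simp)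
        (fun s hs => by rw [Real.norm_eq_abs, abs_abs]; exact hb s hs)
      rw [Real.norm_eq_abs] at this
      refine (le_abs_self _).trans (this.trans (le_of_eq ?_))
      simp [Measure.real, hL.le]; ring
    · simp only [h1, if_false]
      have e : (fun s => |kk l (a, (t, s))|) = fun s => (1 / (2 * a)) * Real.exp (-a * ‖l s - l t‖ ^ 2) := by
        ext s
        simp only [kk, h1, if_false, sub_zero]
        rw [abs_of_pos (by positivity)]; ring
      rw [e, integral_const_mul]
      calc _ ≤ 1 / (2 * a) * (Real.sqrt (π / c ^ 2) * a ^ (-(1/2) : ℝ)) := by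
            gcongr; exact gauss_int L hL l hc hper c hc0 hch t ht a ha
        _ ≤ 1 / a * (Real.sqrt (π / c ^ 2) * a ^ (-(1/2) : ℝ)) := by
            gcongr; linarith
        _ = Real.sqrt (π / c ^ 2) * (a ^ (-1 : ℝ) * a ^ (-(1/2) : ℝ)) := by
            rw [Real.rpow_neg_one]; ring
        _ = _ := by rw [← Real.rpow_add ha]; norm_num

lemma kk_int1 (L : ℝ) (hL : 0 < L) (l : ℝ → ℂ) (hc : Continuous l) (W : ℝ → ℝ)
    (hW : Integrable W (volume.restrict (Set.Ioi 0))) 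
    (hk : ∀ t ∈ Set.Icc 0 L, ∀ a > 0, ∫ s, |kk l (a, (t, s))| ∂(muL L) ≤ W a)
    (U : ℝ → ℝ) (hU : Integrable U (muL L)) :
    Integrable (fun q : ℝ × (ℝ × ℝ) => U q.2.1 * kk l q) ((volume.restrict (Set.Ioi 0)).prod ((muL L).prod (muL L))) := by
  have hkm := kk_meas l hc
  have hm : AEStronglyMeasurable (fun q : ℝ × (ℝ × ℝ) => U q.2.1 * kk l q) ((volume.restrict (Set.Ioi 0)).prod ((muL L).prod (muL L))) := by
    apply AEStronglyMeasurable.mul _ hkm.aestronglyMeasurable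
    have h1 : AEStronglyMeasurable (fun p : ℝ × ℝ => U p.1) ((muL L).prod (muL L)) := hU.1.comp_fst
    exact h1.comp_snd (f := fun p : ℝ × ℝ => U p.1)
  have hsec : ∀ a > 0, Integrable (fun p : ℝ × ℝ => U p.1 * kk l (a, p)) ((muL L).prod (muL L)) := by
    intro a ha
    have h1 : Integrable (fun p : ℝ × ℝ => U p.1) ((muL L).prod (muL L)) := hU.comp_fst _
    apply h1.mul_bdd (c := 1 / (2 * a)) (hkm.comp measurable_prodMk_left).aestronglyMeasurable
    exact Filter.Eventually.of_forall fun p => kk_bd l a p.1 p.2 ha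
  have hae : ∀ᵐ a ∂(volume.restrict (Set.Ioi (0:ℝ))), 0 < a := ae_restrict_mem measurableSet_Ioi
  rw [integrable_prod_iff hm]
  refine ⟨?_, ?_⟩
  · filter_upwards [hae] with a ha using hsec a ha
  · refine Integrable.mono' (hW.mul_const (∫ t, |U t| ∂(muL L))) hm.norm.integral_prod_right' ?_
    filter_upwards [hae] with a ha
    rw [Real.norm_eq_abs, abs_of_nonneg (integral_nonneg fun p => norm_nonneg _)]
    rw [integral_prod _ (hsec a ha).norm, ← integral_const_mul]
    apply integral_mono_ae (hsec a ha).norm.integral_prod_left (hU.abs.const_mul _)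
    filter_upwards [ae_restrict_mem measurableSet_Ioc] with t ht
    simp only [norm_mul, Real.norm_eq_abs]
    rw [integral_const_mul, mul_comm]
    gcongr
    exact hk t ⟨ht.1.le, ht.2⟩ a ha

lemma kk_int2 (L : ℝ) (hL : 0 < L) (l : ℝ → ℂ) (hc : Continuous l) (W : ℝ → ℝ)
    (hW : Integrable W (volume.restrict (Set.Ioi 0))) 
    (hk : ∀ t ∈ Set.Icc 0 L, ∀ a > 0, ∫ s, |kk l (a, (t, s))| ∂(muL L) ≤ W a)
    (u g : ℝ → ℝ) (hu : MemLp u 2 (muL L)) (hg : MemLp g 2 (muL L)) :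
    Integrable (fun q : ℝ × (ℝ × ℝ) => u q.2.1 * g q.2.2 * kk l q) ((volume.restrict (Set.Ioi 0)).prod ((muL L).prod (muL L))) := by
  have h1 := kk_int1 L hL l hc W hW hk _ hu.integrable_sq
  have h2 := kk_int1 L hL l hc W hW hk _ hg.integrable_sq
  have mp : MeasurePreserving (fun q : ℝ × (ℝ × ℝ) => (q.1, q.2.swap)) ((volume.restrict (Set.Ioi 0)).prod ((muL L).prod (muL L))) ((volume.restrict (Set.Ioi 0)).prod ((muL L).prod (muL L))) := 
    (MeasurePreserving.id _).prod Measure.measurePreserving_swap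
  have h3 := mp.integrable_comp_of_integrable h2
  refine Integrable.mono' (h1.norm.add h3.norm) ?_ ?_
  · apply AEStronglyMeasurable.mul _ (kk_meas l hc).aestronglyMeasurable
    have h1 : AEStronglyMeasurable (fun p : ℝ × ℝ => u p.1 * g p.2) ((muL L).prod (muL L)) := hu.1.comp_fst.mul hg.1.comp_snd
    exact h1.comp_snd (f := fun p : ℝ × ℝ => u p.1 * g p.2)
  · refine Filter.Eventually.of_forall fun q => ?_
    obtain ⟨a, t, s⟩ := q
    simp only [Pi.add_apply, Function.comp, Prod.swap, norm_mul, Real.norm_eq_abs, kk_symm l a s t, ← add_mul]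
    gcongr
    rw [abs_of_nonneg (sq_nonneg (u t)), abs_of_nonneg (sq_nonneg (g s)), ← sq_abs (u t), ← sq_abs (g s)]
    nlinarith [sq_nonneg (|u t| - |g s|), sq_nonneg (|u t| + |g s|)]

lemma hasDerivAt_normsq (l : ℝ → ℂ) (hd : Differentiable ℝ l) (t s : ℝ) :
    HasDerivAt (fun s => ‖l s - l t‖ ^ 2) (2 * dotR (l s - l t) (deriv l s)) s := by
  have h := (hd s).hasDerivAt
  have h1 : HasDerivAt (fun s => (l s).re) (deriv l s).re s := Complex.reCLM.hasFDerivAt.comp_hasDerivAt s h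
  have h2 : HasDerivAt (fun s => (l s).im) (deriv l s).im s := Complex.imCLM.hasFDerivAt.comp_hasDerivAt s h
  have e : (fun s => ‖l s - l t‖ ^ 2) = fun s => ((l s).re - (l t).re) ^ 2 + ((l s).im - (l t).im) ^ 2 := by
    ext s
    simp only [← Complex.normSq_eq_norm_sq, Complex.normSq_apply, Complex.sub_re, Complex.sub_im]; ring
  rw [e]
  refine (((h1.sub_const _).pow 2).add ((h2.sub_const _).pow 2)).congr_deriv ?_
  simp only [dotR, Complex.sub_re, Complex.sub_im]; push_cast; ring

/-- integration by parts over the period -/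
lemma ibp (L : ℝ) (hL : 0 < L) (l : ℝ → ℂ) (hsm : ContDiff ℝ (⊤ : ℕ∞) l) (hper : ∀ s, l (s + L) = l s)
    (φ f : ℝ → ℝ) (hφ : ∀ s, HasDerivAt φ (f s) s) (hf : Continuous f) (hφp : ∀ s, φ (s + L) = φ s)
    (t a : ℝ) (ha : 0 < a) :
    ∫ s, (φ s - φ t) * dotR (l s - l t) (deriv l s) * Real.exp (-a * ‖l s - l t‖ ^ 2) ∂(muL L)
      = ∫ s, f s * kk l (a, (t, s)) ∂(muL L) := by
  have hd : Differentiable ℝ l := hsm.differentiable (by simp)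
  have hc : Continuous l := hsm.continuous
  have hdc : Continuous (deriv l) := hsm.continuous_deriv (by simp)
  have hv : ∀ s, HasDerivAt (fun s => -(1 / (2 * a)) * Real.exp (-a * ‖l s - l t‖ ^ 2))
      (dotR (l s - l t) (deriv l s) * Real.exp (-a * ‖l s - l t‖ ^ 2)) s := fun s => by
    refine ((((hasDerivAt_normsq l hd t s).const_mul (-a)).exp).const_mul (-(1 / (2 * a)))).congr_deriv ?_
    field_simp
  have hc1 : Continuous fun s => dotR (l s - l t) (deriv l s) * Real.exp (-a * ‖l s - l t‖ ^ 2) := by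
    unfold dotR; fun_prop
  have key := intervalIntegral.integral_mul_deriv_eq_deriv_mul (a := 0) (b := L) (u := fun s => φ s - φ t) (u' := f) 
    (fun s _ => (hφ s).sub_const _) (fun s _ => hv s) (hf.intervalIntegrable _ _) (hc1.intervalIntegrable _ _)
  have e0 : φ L = φ 0 := by simpa using hφp 0
  have e1 : l L = l 0 := by simpa using hper 0
  have ef : ∫ s in (0:ℝ)..L, f s = 0 := by
    rw [intervalIntegral.integral_eq_sub_of_hasDerivAt (fun s _ => hφ s) (hf.intervalIntegrable _ _), e0, sub_self]
  rw [e0, e1, sub_self, zero_sub] at key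
  rw [← intervalIntegral.integral_of_le hL.le, ← intervalIntegral.integral_of_le hL.le]
  simp only [mul_assoc]
  rw [key, ← intervalIntegral.integral_neg]
  have e2 : (fun s => f s * kk l (a, (t, s))) = fun s => -(f s * (-(1 / (2 * a)) * Real.exp (-a * ‖l s - l t‖ ^ 2))) - f s * ((if a ≤ 1 then 1 else 0) / (2 * a)) := by
    ext s; simp only [kk]; ring
  rw [e2, intervalIntegral.integral_sub, intervalIntegral.integral_mul_const, ef, zero_mul, sub_zero]
  · apply Continuous.intervalIntegrable; fun_prop
  · apply Continuous.intervalIntegrable; fun_prop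

lemma ae_ec_ne (L : ℝ) (hL : 0 < L) (t : ℝ) : ∀ᵐ s ∂(muL L), ec L s ≠ ec L t := by
  have : (Set.range fun m : ℤ => t + m * L).Countable := Set.countable_range _
  have h := this.ae_notMem (volume : Measure ℝ)
  filter_upwards [ae_restrict_of_ae h] with s hs he
  obtain ⟨m, hm⟩ := (ec_eq_iff L hL s t).1 he
  exact hs ⟨m, hm.symm⟩

lemma U_eq (L : ℝ) (hL : 0 < L) (l : ℝ → ℂ) (hsm : ContDiff ℝ (⊤ : ℕ∞) l) (hper : ∀ s, l (s + L) = l s)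
    (hinj : Set.InjOn l (Set.Ico 0 L)) (W : ℝ → ℝ)
    (hW : Integrable W (volume.restrict (Set.Ioi 0))) 
    (hk : ∀ t ∈ Set.Icc 0 L, ∀ a > 0, ∫ s, |kk l (a, (t, s))| ∂(muL L) ≤ W a)
    (φ f : ℝ → ℝ) (hφ : ∀ s, HasDerivAt φ (f s) s) (hf : Continuous f) (hφp : ∀ s, φ (s + L) = φ s)
    (m : ℝ × ℝ → ℝ) (hm : Continuous m) (hmb : ∀ s t, ec L s ≠ ec L t → m (s, t) = (φ s - φ t) * beta l s t)
    (t : ℝ) (ht : t ∈ Set.Icc 0 L) :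
    ∫ s in (0:ℝ)..L, m (s, t) = ∫ s, f s * (∫ a in Set.Ioi 0, kk l (a, (t, s))) ∂(muL L) := by
  have hc : Continuous l := hsm.continuous
  have hdc : Continuous (deriv l) := hsm.continuous_deriv (by simp)
  have hφc : Continuous φ := continuous_iff_continuousAt.2 fun s => (hφ s).continuousAt
  rw [intervalIntegral.integral_of_le hL.le]
  let F : ℝ × ℝ → ℝ := fun p => (φ p.1 - φ t) * dotR (l p.1 - l t) (deriv l p.1) * Real.exp (-p.2 * ‖l p.1 - l t‖ ^ 2)
  have hFc : Continuous F := by simp only [F]; unfold dotR; fun_prop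
  have hr : ∀ s, ec L s ≠ ec L t → 0 < ‖l s - l t‖ ^ 2 := fun s hs => by
    have : l s - l t ≠ 0 := fun h => hs (l_eq_imp L hL l hper hinj s t (sub_eq_zero.1 h))
    positivity
  have hei : ∀ r : ℝ, 0 < r → IntegrableOn (fun a => Real.exp (-a * r)) (Set.Ioi 0) := fun r hr => by
    have := integrableOn_exp_mul_Ioi (neg_lt_zero.2 hr) 0
    refine this.congr_fun (fun a _ => ?_) measurableSet_Ioi
    simp only; congr 1; ring
  have hev : ∀ r : ℝ, 0 < r → ∫ a in Set.Ioi 0, Real.exp (-a * r) = 1 / r := fun r hr => by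
    have := integral_exp_mul_Ioi (neg_lt_zero.2 hr) 0
    rw [mul_zero, Real.exp_zero, neg_div_neg_eq] at this
    rw [← this]; congr 1; ext a; congr 1; ring
  have hFint : Integrable F ((muL L).prod (volume.restrict (Set.Ioi 0))) := by
    rw [integrable_prod_iff hFc.aestronglyMeasurable]
    constructor
    · filter_upwards [ae_ec_ne L hL t] with s hs
      exact (hei _ (hr s hs)).const_mul ((φ s - φ t) * dotR (l s - l t) (deriv l s))
    · have hmi : Integrable (fun s => ‖m (s, t)‖) (muL L) :=
        (Continuous.integrableOn_Ioc (by fun_prop : Continuous fun s => ‖m (s, t)‖))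
      refine hmi.congr ?_
      filter_upwards [ae_ec_ne L hL t] with s hs
      simp only [F, norm_mul, Real.norm_eq_abs, Real.abs_exp]
      rw [integral_const_mul, hev _ (hr s hs), hmb s t hs, beta, abs_mul, abs_div, abs_of_pos (hr s hs)]
      ring
  have e1 : ∫ s in Set.Ioc 0 L, m (s, t) = ∫ s, (∫ a in Set.Ioi 0, F (s, a)) ∂(muL L) := by
    apply integral_congr_ae
    filter_upwards [ae_ec_ne L hL t] with s hs
    simp only [F]
    rw [integral_const_mul, hev _ (hr s hs), hmb s t hs, beta]
    ring
  have hkm := kk_meas l hc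
  have e2 : ∫ s, (∫ a in Set.Ioi 0, F (s, a)) ∂(muL L) = ∫ a in Set.Ioi 0, ∫ s, f s * kk l (a, (t, s)) ∂(muL L) := by
    rw [integral_integral_swap (f := fun s a => F (s, a)) hFint]
    apply setIntegral_congr_fun measurableSet_Ioi
    intro a ha
    exact ibp L hL l hsm hper φ f hφ hf hφp t a ha
  rw [e1, e2]
  obtain ⟨B, hB⟩ := (isCompact_Icc (a := (0:ℝ)) (b := L)).exists_bound_of_continuousOn hf.continuousOn
  have hB0 : 0 ≤ B := (norm_nonneg _).trans (hB 0 ⟨le_rfl, hL.le⟩)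
  have hG : Integrable (fun p : ℝ × ℝ => f p.2 * kk l (p.1, (t, p.2))) ((volume.restrict (Set.Ioi 0)).prod (muL L)) := by
    have hmeas : AEStronglyMeasurable (fun p : ℝ × ℝ => f p.2 * kk l (p.1, (t, p.2))) ((volume.restrict (Set.Ioi 0)).prod (muL L)) := by
      apply Measurable.aestronglyMeasurable
      apply Measurable.mul (hf.measurable.comp measurable_snd)
      exact hkm.comp (by fun_prop : Measurable fun p : ℝ × ℝ => (p.1, (t, p.2)))
    have hki : ∀ a > 0, Integrable (fun s => kk l (a, (t, s))) (muL L) := fun a ha => by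
      refine Integrable.mono' (integrable_const (1 / (2 * a))) ?_ ?_
      · exact (hkm.comp (by fun_prop : Measurable fun s : ℝ => (a, (t, s)))).aestronglyMeasurable
      · exact Filter.Eventually.of_forall fun s => kk_bd l a t s ha
    have hbd : ∀ᵐ s ∂(muL L), ‖f s‖ ≤ B := by
      filter_upwards [ae_restrict_mem measurableSet_Ioc] with s hs using hB s ⟨hs.1.le, hs.2⟩
    have hfki : ∀ a > 0, Integrable (fun s => f s * kk l (a, (t, s))) (muL L) := fun a ha =>
      (hki a ha).bdd_mul hf.aestronglyMeasurable hbd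
    rw [integrable_prod_iff hmeas]
    constructor
    · filter_upwards [ae_restrict_mem measurableSet_Ioi] with a ha using hfki a ha
    · refine Integrable.mono' (hW.const_mul B) hmeas.norm.integral_prod_right' ?_
      filter_upwards [ae_restrict_mem measurableSet_Ioi] with a ha
      rw [Real.norm_eq_abs, abs_of_nonneg (integral_nonneg fun p => norm_nonneg _)]
      calc ∫ s, ‖f s * kk l (a, (t, s))‖ ∂(muL L) ≤ ∫ s, B * |kk l (a, (t, s))| ∂(muL L) := by
            apply integral_mono_ae (hfki a ha).norm ((hki a ha).abs.const_mul _)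
            filter_upwards [hbd] with s hs
            rw [norm_mul, Real.norm_eq_abs (kk _ _)]
            gcongr
        _ ≤ _ := by
            rw [integral_const_mul]; gcongr; exact hk t ht a ha
  rw [integral_integral_swap (f := fun a s => f s * kk l (a, (t, s))) hG]
  simp only [integral_const_mul]

lemma energy (L : ℝ) (hL : 0 < L) (l : ℝ → ℂ) (hsm : ContDiff ℝ (⊤ : ℕ∞) l) (hper : ∀ s, l (s + L) = l s)
    (harc : ∀ s, ‖deriv l s‖ = 1) (hinj : Set.InjOn l (Set.Ico 0 L))
    (ζ : ℝ → ℝ) (hζ : MemLp ζ 2 (muL L)) (h0 : ∫ t, ζ t ∂(muL L) = 0)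
    (hU : ∀ (φ : ℝ → ℝ) (m : ℝ × ℝ → ℝ), ContDiff ℝ 1 φ → (∀ s, φ (s + L) = φ s) → Continuous m → 
      (∀ s t, m (s, t + L) = m (s, t)) → 
      (∀ s t, ec L s ≠ ec L t → m (s, t) = (φ s - φ t) * beta l s t) →
      ∫ t, ζ t * (∫ s in (0:ℝ)..L, m (s, t)) ∂(muL L) = 0) :
    ζ =ᵐ[muL L] 0 := by
  have : Fact (0 < L) := ⟨hL⟩
  have hc : Continuous l := hsm.continuous
  obtain ⟨c, hc0, hch⟩ := exists_chord L hL l hsm hper harc hinj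
  obtain ⟨W, hW, hk⟩ := kk_sec L hL l hc hper c hc0 hch
  have hζi : Integrable ζ (muL L) := hζ.integrable (by norm_num)
  let G : ℝ × ℝ → ℝ := fun p => ∫ a in Set.Ioi 0, kk l (a, p)
  have hGi : ∀ u g : ℝ → ℝ, MemLp u 2 (muL L) → MemLp g 2 (muL L) → 
      Integrable (fun p : ℝ × ℝ => u p.1 * g p.2 * G p) ((muL L).prod (muL L)) := fun u g hu hg => by
    have := (kk_int2 L hL l hc W hW hk u g hu hg).integral_prod_right
    simp only [integral_const_mul] at this
    exact this
  let H : ℝ → ℝ := fun s => ∫ t, ζ t * G (t, s) ∂(muL L)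
  have hHi : Integrable H (muL L) := by
    have := (hGi ζ (fun _ => 1) hζ (memLp_const _)).integral_prod_right
    simpa [H] using this
  have hT : ∀ g : ℝ → ℝ, MemLp g 2 (muL L) → ∫ p : ℝ × ℝ, ζ p.1 * g p.2 * G p ∂((muL L).prod (muL L)) = ∫ s, g s * H s ∂(muL L) := by
    intro g hg
    rw [integral_prod_symm _ (hGi ζ g hζ hg)]
    congr 1; ext s
    simp only [H]
    rw [← integral_const_mul]
    congr 1; ext t; ring
  have hT' : ∀ g : ℝ → ℝ, MemLp g 2 (muL L) → ∫ p : ℝ × ℝ, ζ p.1 * g p.2 * G p ∂((muL L).prod (muL L)) = ∫ t, ζ t * ∫ s, g s * G (t, s) ∂(muL L) ∂(muL L) := by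
    intro g hg
    rw [integral_prod _ (hGi ζ g hζ hg)]
    congr 1; ext t
    rw [← integral_const_mul]
    congr 1; ext s; ring
  -- mean value of H
  let hb : ℝ := L⁻¹ * ∫ s, H s ∂(muL L)
  have hvol : (muL L).real Set.univ = L := by simp [Measure.real, hL.le]
  have hHc : (fun s => H s - hb) =ᵐ[muL L] 0 := by
    apply test_zero L (fun s => H s - hb) (hHi.sub (integrable_const hb))
    intro g
    let g1 : ℝ → ℝ := fun s => g (s : AddCircle L)
    have hg1 : Continuous g1 := g.continuous.comp (AddCircle.continuous_mk' L)
    have hg1p : ∀ s, g1 (s + L) = g1 s := fun s => by simp [g1]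
    have hg1i : Integrable g1 (muL L) := hg1.integrableOn_Ioc
    have hHg : Integrable (fun s => g1 s * H s) (muL L) := by
      apply hHi.bdd_mul (c := ‖g‖) hg1.aestronglyMeasurable
      exact Filter.Eventually.of_forall fun t => g.norm_coe_le_norm _
    let gb : ℝ := L⁻¹ * ∫ s, g1 s ∂(muL L)
    let f : ℝ → ℝ := fun s => g1 s - gb
    have hf : Continuous f := hg1.sub continuous_const
    have hfp : Function.Periodic f L := fun s => by simp only [f, hg1p]
    have hf0 : ∫ s in (0:ℝ)..L, f s = 0 := by
      rw [intervalIntegral.integral_of_le hL.le]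
      simp only [f]
      rw [integral_sub hg1i (integrable_const _), integral_const, hvol, smul_eq_mul]
      simp only [gb]
      field_simp
      ring
    let φ : ℝ → ℝ := fun s => ∫ x in (0:ℝ)..s, f x
    have hφ : ∀ s, HasDerivAt φ (f s) s := fun s => 
      intervalIntegral.integral_hasDerivAt_right (hf.intervalIntegrable _ _) (hf.stronglyMeasurableAtFilter _ _) hf.continuousAt
    have hφ1 : ContDiff ℝ 1 φ := by
      rw [contDiff_one_iff_deriv]
      refine ⟨fun s => (hφ s).differentiableAt, ?_⟩
      have : deriv φ = f := funext fun s => (hφ s).deriv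
      rw [this]; exact hf
    have hφp : ∀ s, φ (s + L) = φ s := fun s => by
      have h1 := hfp.intervalIntegral_add_eq 0 s
      rw [zero_add, hf0] at h1
      simp only [φ]
      rw [← intervalIntegral.integral_add_adjacent_intervals (hf.intervalIntegrable 0 s) (hf.intervalIntegrable s (s + L)), ← h1, add_zero]
    obtain ⟨m, hmc, hmp, hmb⟩ := exists_m L hL l hsm hper harc hinj φ hφ1 hφp
    have hUm := hU φ m hφ1 hφp hmc hmp hmb
    have hf2 : MemLp f 2 (muL L) := by
      obtain ⟨B, hB⟩ := (isCompact_Icc (a := (0:ℝ)) (b := L)).exists_bound_of_continuousOn hf.continuousOn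
      refine MemLp.of_bound hf.aestronglyMeasurable B ?_
      filter_upwards [ae_restrict_mem measurableSet_Ioc] with s hs using hB s ⟨hs.1.le, hs.2⟩
    have h1 : ∫ s, f s * H s ∂(muL L) = 0 := by
      rw [← hT f hf2, hT' f hf2, ← hUm]
      apply integral_congr_ae
      filter_upwards [ae_restrict_mem measurableSet_Ioc] with t ht
      rw [U_eq L hL l hsm hper hinj W hW hk φ f hφ hf hφp m hmc hmb t ⟨ht.1.le, ht.2⟩]
    have h2 : ∫ s, f s * H s ∂(muL L) = (∫ s, g1 s * H s ∂(muL L)) - gb * ∫ s, H s ∂(muL L) := by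
      simp only [f, sub_mul]
      rw [integral_sub hHg (hHi.const_mul _), integral_const_mul]
    have h3 : ∫ s, (H s - hb) * g (s : AddCircle L) ∂(muL L) = (∫ s, g1 s * H s ∂(muL L)) - hb * ∫ s, g1 s ∂(muL L) := by
      rw [← integral_const_mul, ← integral_sub hHg (hg1i.const_mul _)]
      congr 1; ext s; simp only [g1]; ring
    rw [h3]
    rw [h2] at h1
    rw [← h1]; simp only [gb, hb]; ring
  have hTz : ∫ p : ℝ × ℝ, ζ p.1 * ζ p.2 * G p ∂((muL L).prod (muL L)) = 0 := by
    rw [hT ζ hζ]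
    have : ∫ s, ζ s * H s ∂(muL L) = ∫ s, ζ s * hb ∂(muL L) := by
      apply integral_congr_ae
      filter_upwards [hHc] with s hs
      have : H s = hb := sub_eq_zero.1 hs
      rw [this]
    rw [this, integral_mul_const, h0, zero_mul]
  have hI := kk_int2 L hL l hc W hW hk ζ ζ hζ hζ
  have hTa : ∫ a in Set.Ioi 0, ∫ p : ℝ × ℝ, ζ p.1 * ζ p.2 * kk l (a, p) ∂((muL L).prod (muL L)) = 0 := by
    refine Eq.trans ?_ hTz
    have h1 := integral_prod _ hI
    have h2 := integral_prod_symm _ hI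
    simp only at h1 h2
    rw [← h1, h2]
    simp only [integral_const_mul, G]
  have hQ : ∀ a > 0, ∫ p : ℝ × ℝ, ζ p.1 * ζ p.2 * kk l (a, p) ∂((muL L).prod (muL L)) = 
      (1 / (2 * a)) * ∫ p : ℝ × ℝ, ζ p.1 * ζ p.2 * Real.exp (-a * ‖l p.2 - l p.1‖ ^ 2) ∂((muL L).prod (muL L)) := by
    intro a ha
    have hζζ := hζi.mul_prod hζi
    have hex : Integrable (fun p : ℝ × ℝ => ζ p.1 * ζ p.2 * Real.exp (-a * ‖l p.2 - l p.1‖ ^ 2)) ((muL L).prod (muL L)) := by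
      apply hζζ.mul_bdd (c := 1)
      · exact (by fun_prop : Continuous fun p : ℝ × ℝ => Real.exp (-a * ‖l p.2 - l p.1‖ ^ 2)).aestronglyMeasurable
      · exact Filter.Eventually.of_forall fun p => exp_bd a _ ha
    have e : (fun p : ℝ × ℝ => ζ p.1 * ζ p.2 * kk l (a, p)) = fun p => (1 / (2 * a)) * (ζ p.1 * ζ p.2 * Real.exp (-a * ‖l p.2 - l p.1‖ ^ 2)) - ((if a ≤ 1 then 1 else 0) / (2 * a)) * (ζ p.1 * ζ p.2) := by
      ext p; simp only [kk]; ring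
    rw [e, integral_sub (hex.const_mul _) (hζζ.const_mul _), integral_const_mul, integral_const_mul, integral_prod_mul ζ ζ, h0]
    ring
  have hnn : ∀ a > 0, 0 ≤ ∫ p : ℝ × ℝ, ζ p.1 * ζ p.2 * kk l (a, p) ∂((muL L).prod (muL L)) := fun a ha => by
    rw [hQ a ha]
    exact mul_nonneg (by positivity) (gauss_pos L l hc hper hinj ζ hζi a ha).1
  have hae : ∀ᵐ a ∂(volume.restrict (Set.Ioi (0:ℝ))), 0 < a := ae_restrict_mem measurableSet_Ioi
  have hz := (setIntegral_eq_zero_iff_of_nonneg_ae (by filter_upwards [hae] with a ha using hnn a ha) hI.integral_prod_left).1 hTa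
  have : (ae (volume.restrict (Set.Ioi (0:ℝ)))).NeBot := by
    rw [ae_neBot]
    intro h
    have := Measure.restrict_eq_zero.1 h
    simp at this
  obtain ⟨a, ha0, ha⟩ := (hz.and hae).exists
  simp only [Pi.zero_apply] at ha0
  rw [hQ a ha] at ha0
  exact (gauss_pos L l hc hper hinj ζ hζi a ha).2 ((mul_eq_zero.1 ha0).resolve_left (by positivity))

lemma l2_nonneg {N : ℕ} (z : Fin N → ℝ) : 0 ≤ l2norm z := Real.sqrt_nonneg _

lemma l2_sq {N : ℕ} (z : Fin N → ℝ) : l2norm z ^ 2 = (N:ℝ)⁻¹ * ∑ i, z i ^ 2 :=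
  Real.sq_sqrt (by positivity)

lemma l2_cs {N : ℕ} (b z : Fin N → ℝ) : (N:ℝ)⁻¹ * |∑ i, b i * z i| ≤ l2norm b * l2norm z := by
  apply le_of_sq_le_sq _ (mul_nonneg (l2_nonneg b) (l2_nonneg z))
  rw [mul_pow, mul_pow, l2_sq, l2_sq, sq_abs]
  have := Finset.sum_mul_sq_le_sq_mul_sq Finset.univ b z
  calc (N:ℝ)⁻¹ ^ 2 * (∑ i, b i * z i) ^ 2 ≤ (N:ℝ)⁻¹ ^ 2 * ((∑ i, b i ^ 2) * ∑ i, z i ^ 2) := by gcongr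
    _ = _ := by ring

lemma l2_le_const {N : ℕ} (z : Fin N → ℝ) (c : ℝ) (hc : 0 ≤ c) (h : ∀ i, |z i| ≤ c) : l2norm z ≤ c := by
  apply le_of_sq_le_sq _ hc
  rw [l2_sq]
  have : ∑ i, z i ^ 2 ≤ ∑ i : Fin N, c ^ 2 := Finset.sum_le_sum fun i _ => by
    rw [← sq_abs]; gcongr; exact h i
  calc (N:ℝ)⁻¹ * ∑ i, z i ^ 2 ≤ (N:ℝ)⁻¹ * ∑ i : Fin N, c ^ 2 := by gcongr
    _ = ((N:ℝ)⁻¹ * N) * c ^ 2 := by simp; ring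
    _ ≤ 1 * c ^ 2 := by gcongr; exact inv_mul_le_one
    _ = _ := one_mul _

lemma l2_abs {N : ℕ} (z : Fin N → ℝ) : l2norm (fun i => |z i|) = l2norm z := by
  simp [l2norm, sq_abs]

lemma mean_abs_le {N : ℕ} (z : Fin N → ℝ) : (N:ℝ)⁻¹ * ∑ i, |z i| ≤ l2norm z := by
  have h1 := l2_cs (fun _ => 1) (fun i => |z i|)
  rw [l2_abs] at h1
  simp only [one_mul] at h1
  rw [abs_of_nonneg (by positivity)] at h1
  have h2 := l2_le_const (fun _ : Fin N => (1:ℝ)) 1 zero_le_one (by simp)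
  nlinarith [l2_nonneg z]

lemma l2_add {N : ℕ} (x y : Fin N → ℝ) : l2norm (fun i => x i + y i) ≤ l2norm x + l2norm y := by
  apply le_of_sq_le_sq _ (add_nonneg (l2_nonneg x) (l2_nonneg y))
  rw [add_sq, l2_sq, l2_sq, l2_sq]
  have h := l2_cs x y
  have e : (N:ℝ)⁻¹ * ∑ i, (x i + y i) ^ 2 = (N:ℝ)⁻¹ * ∑ i, x i ^ 2 + 2 * ((N:ℝ)⁻¹ * ∑ i, x i * y i) + (N:ℝ)⁻¹ * ∑ i, y i ^ 2 := by
    simp only [add_sq, Finset.sum_add_distrib, mul_assoc, ← Finset.mul_sum]; ring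
  rw [e]
  have h2 : (N:ℝ)⁻¹ * ∑ i, x i * y i ≤ (N:ℝ)⁻¹ * |∑ i, x i * y i| := by gcongr; exact le_abs_self _
  linarith

lemma l2_smul {N : ℕ} (c : ℝ) (x : Fin N → ℝ) : l2norm (fun i => c * x i) = |c| * l2norm x := by
  have : 0 ≤ |c| * l2norm x := mul_nonneg (abs_nonneg _) (l2_nonneg x)
  have h2 : l2norm (fun i => c * x i) ^ 2 = (|c| * l2norm x) ^ 2 := by
    rw [mul_pow, l2_sq, l2_sq, sq_abs]
    simp only [mul_pow, ← Finset.mul_sum]; ring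
  exact (pow_left_inj₀ (l2_nonneg _) this two_ne_zero).1 h2

lemma sum_bd {N : ℕ} (b z : Fin N → ℝ) (c : ℝ) (h : ∀ i, |b i| ≤ c) (hc : 0 ≤ c) :
    (N:ℝ)⁻¹ * |∑ i, b i * z i| ≤ c * l2norm z := by
  have h1 : |∑ i, b i * z i| ≤ ∑ i, c * |z i| := (Finset.abs_sum_le_sum_abs _ _).trans
    (Finset.sum_le_sum fun i _ => by rw [abs_mul]; gcongr; exact h i)
  rw [← Finset.mul_sum] at h1
  calc (N:ℝ)⁻¹ * |∑ i, b i * z i| ≤ (N:ℝ)⁻¹ * (c * ∑ i, |z i|) := by gcongr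
    _ = c * ((N:ℝ)⁻¹ * ∑ i, |z i|) := by ring
    _ ≤ _ := by gcongr; exact mean_abs_le z

/-- application of the matrix family -/
def Ap (A : (N : ℕ) → Fin N → Fin N → ℝ) {N : ℕ} (z : Fin N → ℝ) : Fin N → ℝ := fun i => ∑ j, A N i j * z j

/-- the main property of weights -/
def PP (L : ℝ) (A : (N : ℕ) → Fin N → Fin N → ℝ) (b : ℝ → ℝ) : Prop :=
  ∀ ε > 0, ∃ C : ℝ, 0 ≤ C ∧ ∃ N₀ : ℕ, ∀ N ≥ N₀, ∀ z : Fin N → ℝ,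
    |L / N * ∑ j, b (tU L N j) * z j| ≤ ε * l2norm z + C * (|avg z| + l2norm (Ap A z))

lemma PP_one (L : ℝ) (hL : 0 < L) (A) : PP L A (fun _ => 1) := by
  intro ε hε
  refine ⟨L, hL.le, 0, fun N _ z => ?_⟩
  have e : L / N * ∑ j, 1 * z j = L * avg z := by simp only [one_mul, avg]; ring
  rw [e, abs_mul, abs_of_pos hL]
  have := mul_nonneg hε.le (l2_nonneg z)
  have := mul_nonneg hL.le (l2_nonneg (Ap A z))
  linarith

lemma PP_add (L : ℝ) (A) (b b' : ℝ → ℝ) (h : PP L A b) (h' : PP L A b') : PP L A (fun t => b t + b' t) := by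
  intro ε hε
  obtain ⟨C, hC, N₀, H⟩ := h (ε / 2) (by positivity)
  obtain ⟨C', hC', N₀', H'⟩ := h' (ε / 2) (by positivity)
  refine ⟨C + C', by positivity, max N₀ N₀', fun N hN z => ?_⟩
  have h1 := H N (le_of_max_le_left hN) z
  have h2 := H' N (le_of_max_le_right hN) z
  have e : L / N * ∑ j, (b (tU L N j) + b' (tU L N j)) * z j = L / N * ∑ j, b (tU L N j) * z j + L / N * ∑ j, b' (tU L N j) * z j := by
    simp only [add_mul, Finset.sum_add_distrib]; ring
  rw [e]
  refine (abs_add_le _ _).trans ((add_le_add h1 h2).trans (le_of_eq (by ring)))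

lemma PP_smul (L : ℝ) (A) (c : ℝ) (b : ℝ → ℝ) (h : PP L A b) : PP L A (fun t => c * b t) := by
  intro ε hε
  obtain ⟨C, hC, N₀, H⟩ := h (ε / (|c| + 1)) (by positivity)
  refine ⟨|c| * C, by positivity, N₀, fun N hN z => ?_⟩
  have h1 := H N hN z
  have e : L / N * ∑ j, (c * b (tU L N j)) * z j = c * (L / N * ∑ j, b (tU L N j) * z j) := by
    simp only [mul_assoc, ← Finset.mul_sum]; ring
  rw [e, abs_mul]
  have h3 : |c| * (ε / (|c| + 1)) ≤ ε := by
    rw [mul_div_assoc', div_le_iff₀ (by positivity)]; nlinarith [abs_nonneg c]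
  calc _ ≤ |c| * (ε / (|c| + 1) * l2norm z + C * (|avg z| + l2norm (Ap A z))) := by gcongr
    _ = (|c| * (ε / (|c| + 1))) * l2norm z + |c| * C * (|avg z| + l2norm (Ap A z)) := by ring
    _ ≤ _ := by gcongr; exact l2_nonneg z

lemma ucont (L : ℝ) (F : ℝ × ℝ → ℝ) (hF : Continuous F) (ε : ℝ) (hε : 0 < ε) :
    ∃ η > 0, ∀ x ∈ Set.Icc 0 L, ∀ y ∈ Set.Icc 0 L, ∀ t ∈ Set.Icc 0 L, |x - y| ≤ η → |F (x, t) - F (y, t)| ≤ ε := by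
  have hu := (isCompact_Icc.prod isCompact_Icc : IsCompact (Set.Icc 0 L ×ˢ Set.Icc 0 L)).uniformContinuousOn_of_continuous hF.continuousOn
  obtain ⟨δ, hδ, H⟩ := Metric.uniformContinuousOn_iff.1 hu ε hε
  refine ⟨δ / 2, by positivity, fun x hx y hy t ht hxy => ?_⟩
  have := H (x, t) ⟨hx, ht⟩ (y, t) ⟨hy, ht⟩ (by rw [Prod.dist_eq]; simp [Real.dist_eq, hδ]; linarith)
  rw [Real.dist_eq] at this; exact this.le

lemma riemann_unif (L : ℝ) (hL : 0 < L) (F : ℝ × ℝ → ℝ) (hF : Continuous F) (ε : ℝ) (hε : 0 < ε) :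
    ∃ N₀ : ℕ, ∀ N ≥ N₀, ∀ t ∈ Set.Icc 0 L, ∀ x : Fin N → ℝ, 
      (∀ i : Fin N, x i ∈ Set.Icc (i.val * (L / N)) ((i.val + 1) * (L / N))) →
      |L / N * ∑ i, F (x i, t) - ∫ s in (0:ℝ)..L, F (s, t)| ≤ ε := by
  obtain ⟨η, hη, H⟩ := ucont L F hF (ε / L) (by positivity)
  obtain ⟨n, hn⟩ := exists_nat_gt (L / η)
  refine ⟨n + 1, fun N hN t ht x hx => ?_⟩
  have hN0 : 0 < N := by omega
  have hNr : (0:ℝ) < N := by exact_mod_cast hN0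
  have hnN : (n:ℝ) ≤ N := by exact_mod_cast (by omega : n ≤ N)
  have := riemann L hL N hN0 (fun s => F (s, t)) (by fun_prop) (ε / L) (fun x hx y hy hxy => H x hx y hy t ht (hxy.trans ?_)) x hx
  · refine this.trans (le_of_eq ?_); field_simp
  · rw [div_le_iff₀ hNr]
    rw [div_lt_iff₀ hη] at hn
    nlinarith

lemma PP_closed (L : ℝ) (hL : 0 < L) (A) (b : ℝ → ℝ) (hb : Continuous b)
    (H : ∀ δ > 0, ∃ b' : ℝ → ℝ, Continuous b' ∧ PP L A b' ∧ ∫ s in (0:ℝ)..L, (b s - b' s) ^ 2 ≤ δ) : PP L A b := by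
  intro ε hε
  obtain ⟨b', hb', hP, hi⟩ := H (ε ^ 2 / (8 * L)) (by positivity)
  obtain ⟨C, hC, N₀, h1⟩ := hP (ε / 2) (by positivity)
  obtain ⟨N₁, h2⟩ := riemann_unif L hL (fun p => (b p.1 - b' p.1) ^ 2) (by fun_prop) (ε ^ 2 / (8 * L)) (by positivity)
  refine ⟨C, hC, max N₀ N₁, fun N hN z => ?_⟩
  have h1 := h1 N (le_of_max_le_left hN) z
  have h2 := h2 N (le_of_max_le_right hN) 0 ⟨le_rfl, hL.le⟩ (tU L N) (tU_mem L hL N)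
  have h3 : l2norm (fun j => b (tU L N j) - b' (tU L N j)) ≤ ε / (2 * L) := by
    apply le_of_sq_le_sq _ (by positivity)
    rw [l2_sq]
    have h4 := (abs_le.1 h2).2
    simp only at h4
    have h5 : L * ((N:ℝ)⁻¹ * ∑ j, (b (tU L N j) - b' (tU L N j)) ^ 2) ≤ ε ^ 2 / (8 * L) + ε ^ 2 / (8 * L) := by
      calc _ = L / N * ∑ j, (b (tU L N j) - b' (tU L N j)) ^ 2 := by ring
        _ ≤ _ := by linarith
    rw [← le_div_iff₀' hL] at h5
    refine h5.trans (le_of_eq ?_)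
    field_simp; norm_num
  have e : L / N * ∑ j, b (tU L N j) * z j = L / N * ∑ j, b' (tU L N j) * z j + L / N * ∑ j, (b (tU L N j) - b' (tU L N j)) * z j := by
    simp only [sub_mul, Finset.sum_sub_distrib]; ring
  rw [e]
  have h6 : |L / N * ∑ j, (b (tU L N j) - b' (tU L N j)) * z j| ≤ ε / 2 * l2norm z := by
    rw [abs_mul, abs_of_nonneg (by positivity : 0 ≤ L / N)]
    calc _ = L * ((N:ℝ)⁻¹ * |∑ j, (b (tU L N j) - b' (tU L N j)) * z j|) := by ring
      _ ≤ L * (ε / (2 * L) * l2norm z) :=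
          mul_le_mul_of_nonneg_left ((l2_cs (fun j => b (tU L N j) - b' (tU L N j)) z).trans
            (mul_le_mul_of_nonneg_right h3 (l2_nonneg z))) hL.le
      _ = _ := by field_simp
  refine (abs_add_le _ _).trans ((add_le_add h1 h6).trans (le_of_eq (by ring)))

/-- closeness of the matrix to the model -/
def Close (L : ℝ) (K : ℝ × ℝ → ℝ) (A : (N : ℕ) → Fin N → Fin N → ℝ) (C : ℝ) (N₁ : ℕ) : Prop :=
  0 ≤ C ∧ 2 ≤ N₁ ∧ ∀ N ≥ N₁, ∀ i j : Fin N, |A N i j - (π / N * cn N ((i:ℕ) - (j:ℕ)) + L / N * K (sU L N i, tU L N j))| ≤ C / N ^ 2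

lemma colsum (L : ℝ) (hL : 0 < L) (K : ℝ × ℝ → ℝ) (hKC : ContDiff ℝ 1 K) (hK0 : ∀ t, ∫ s in (0:ℝ)..L, K (s, t) = 0)
    (A) (C : ℝ) (N₁ : ℕ) (hA : Close L K A C N₁) :
    ∃ C₁ : ℝ, 0 ≤ C₁ ∧ ∀ N ≥ N₁, ∀ j : Fin N, |∑ i, A N i j| ≤ C₁ / N := by
  obtain ⟨hC, hN₁, hA⟩ := hA
  obtain ⟨Λ, hΛ, hlip⟩ := lip_K L K hKC
  refine ⟨C + L * (Λ * L), by positivity, fun N hN j => ?_⟩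
  have hN0 : 0 < N := by omega
  have hNr : (0:ℝ) < N := by exact_mod_cast hN0
  have ht := cell_sub L hL N j (tU_mem L hL N j)
  have h1 := riemann L hL N hN0 (fun s => K (s, tU L N j)) (by have := hKC.continuous; fun_prop) (Λ * (L / N))
    (fun x hx y hy hxy => (hlip x hx _ ht y hy _ ht).trans (by
      gcongr; simp only [sub_self, abs_zero]; exact max_le hxy (by positivity))) (sU L N) (sU_mem L hL N)
  rw [hK0, sub_zero] at h1
  have e : ∑ i, A N i j = ∑ i : Fin N, (A N i j - (π / N * cn N ((i:ℕ) - (j:ℕ)) + L / N * K (sU L N i, tU L N j)))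
      + L / N * ∑ i, K (sU L N i, tU L N j) := by
    rw [Finset.sum_sub_distrib, Finset.sum_add_distrib, ← Finset.mul_sum, ← Finset.mul_sum, sum_cn_left]; ring
  rw [e]
  have h2 : |∑ i : Fin N, (A N i j - (π / N * cn N ((i:ℕ) - (j:ℕ)) + L / N * K (sU L N i, tU L N j)))| ≤ C / N := by
    refine (Finset.abs_sum_le_sum_abs _ _).trans ((Finset.sum_le_sum fun i _ => hA N hN i j).trans (le_of_eq ?_))
    simp; field_simp
  refine (abs_add_le _ _).trans ((add_le_add h2 h1).trans (le_of_eq ?_))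
  ring

lemma PP_U (L : ℝ) (hL : 0 < L) (l : ℝ → ℂ) (K : ℝ × ℝ → ℝ) (hKC : ContDiff ℝ 1 K) (hK0 : ∀ t, ∫ s in (0:ℝ)..L, K (s, t) = 0)
    (hK : ∀ s t, ec L s ≠ ec L t → beta l s t = π / L * Real.cot (π * (s - t) / L) + K (s, t))
    (A) (C : ℝ) (N₁ : ℕ) (hA : Close L K A C N₁)
    (φ : ℝ → ℝ) (hφ : Continuous φ) (m : ℝ × ℝ → ℝ) (hm : Continuous m)
    (hmb : ∀ s t, ec L s ≠ ec L t → m (s, t) = (φ s - φ t) * beta l s t) :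
    PP L A (fun t => ∫ s in (0:ℝ)..L, m (s, t)) := by
  obtain ⟨C₁, hC₁, hcol⟩ := colsum L hL K hKC hK0 A C N₁ hA
  obtain ⟨hC, hN₁, hA⟩ := hA
  obtain ⟨B, hB⟩ := (isCompact_Icc (a := (0:ℝ)) (b := L)).exists_bound_of_continuousOn hφ.continuousOn
  have hB0 : 0 ≤ B := (norm_nonneg _).trans (hB 0 ⟨le_rfl, hL.le⟩)
  intro ε hε
  obtain ⟨N₂, hR⟩ := riemann_unif L hL m hm (ε / (2 * L)) (by positivity)
  obtain ⟨n, hn⟩ := exists_nat_gt ((2 * B * C + B * C₁) / (ε / (2 * L)))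
  refine ⟨L * B, by positivity, max (max N₁ N₂) (n + 1), fun N hN z => ?_⟩
  have hNN1 : N₁ ≤ N := by omega
  have hNN2 : N₂ ≤ N := by omega
  have hnN : (n:ℝ) ≤ N := by exact_mod_cast (by omega : n ≤ N)
  have hNr : (0:ℝ) < N := by exact_mod_cast (by omega : 0 < N)
  let c : Fin N → ℝ := fun j => ∑ i, φ (sU L N i) * A N i j
  have hc : ∀ j, |(∫ s in (0:ℝ)..L, m (s, tU L N j)) - c j| ≤ ε / L := by
    intro j
    have ht := cell_sub L hL N j (tU_mem L hL N j)
    have h1 := hR N hNN2 _ ht (sU L N) (sU_mem L hL N)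
    have hAi : ∀ i, |A N i j - L / N * beta l (sU L N i) (tU L N j)| ≤ C / N ^ 2 := fun i => by
      rw [beta_U L hL l K hK]; exact hA N hNN1 i j
    have e : (∫ s in (0:ℝ)..L, m (s, tU L N j)) - c j = -(L / N * ∑ i, m (sU L N i, tU L N j) - ∫ s in (0:ℝ)..L, m (s, tU L N j))
        - ∑ i, (φ (sU L N i) - φ (tU L N j)) * (A N i j - L / N * beta l (sU L N i) (tU L N j)) - φ (tU L N j) * ∑ i, A N i j := by
      have e1 : c j = ∑ i, (L / N * m (sU L N i, tU L N j) + (φ (sU L N i) - φ (tU L N j)) * (A N i j - L / N * beta l (sU L N i) (tU L N j)) + φ (tU L N j) * A N i j) := by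
        refine Finset.sum_congr rfl fun i _ => ?_
        rw [hmb _ _ (ec_U_ne L hL N i j)]; ring
      rw [e1, Finset.sum_add_distrib, Finset.sum_add_distrib, ← Finset.mul_sum, ← Finset.mul_sum]; ring
    have h2 : |∑ i, (φ (sU L N i) - φ (tU L N j)) * (A N i j - L / N * beta l (sU L N i) (tU L N j))| ≤ 2 * B * C / N := by
      refine (Finset.abs_sum_le_sum_abs _ _).trans ((Finset.sum_le_sum (g := fun _ => 2 * B * (C / (N:ℝ) ^ 2)) fun i _ => ?_).trans (le_of_eq ?_))
      · rw [abs_mul]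
        gcongr
        · have := hB _ (cell_sub L hL N i (sU_mem L hL N i))
          have h' := hB _ ht
          rw [Real.norm_eq_abs] at this h'
          refine (abs_sub _ _).trans ?_; linarith
        · exact hAi i
      · simp; field_simp
    have h3 : |φ (tU L N j) * ∑ i, A N i j| ≤ B * (C₁ / N) := by
      rw [abs_mul]; gcongr
      · exact hB _ ht
      · exact hcol N hNN1 j
    have h4 : 2 * B * C / N + B * (C₁ / N) ≤ ε / (2 * L) := by
      rw [div_lt_iff₀ (by positivity)] at hn
      have : 2 * B * C / N + B * (C₁ / N) = (2 * B * C + B * C₁) / N := by ring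
      rw [this, div_le_iff₀ hNr]
      refine hn.le.trans ?_
      rw [mul_comm]; gcongr
    rw [e]
    refine (abs_sub _ _).trans ?_
    refine (add_le_add_left (abs_sub _ _) _).trans ?_
    rw [abs_neg]
    have : ε / L = ε / (2 * L) + ε / (2 * L) := by field_simp; norm_num
    linarith
  have hsw : ∑ j, c j * z j = ∑ i, φ (sU L N i) * Ap A z i := by
    simp only [c, Ap, Finset.sum_mul, Finset.mul_sum]
    rw [Finset.sum_comm]
    refine Finset.sum_congr rfl fun i _ => Finset.sum_congr rfl fun j _ => by ring
  have e : L / N * ∑ j, (∫ s in (0:ℝ)..L, m (s, tU L N j)) * z j = L * ((N:ℝ)⁻¹ * ∑ j, ((∫ s in (0:ℝ)..L, m (s, tU L N j)) - c j) * z j) + L * ((N:ℝ)⁻¹ * ∑ i, φ (sU L N i) * Ap A z i) := by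
    rw [← hsw]
    simp only [sub_mul, Finset.sum_sub_distrib]; ring
  rw [e]
  have g1 := sum_bd (fun j => (∫ s in (0:ℝ)..L, m (s, tU L N j)) - c j) z (ε / L) hc (by positivity)
  have g2 := sum_bd (fun i => φ (sU L N i)) (Ap A z) B (fun i => hB _ (cell_sub L hL N i (sU_mem L hL N i))) hB0
  refine (abs_add_le _ _).trans ?_
  rw [abs_mul, abs_mul, abs_mul, abs_mul, abs_of_pos hL, abs_of_pos (by positivity : 0 < (N:ℝ)⁻¹)]
  have g3 : L * (ε / L * l2norm z) = ε * l2norm z := by field_simp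
  have g4 := mul_le_mul_of_nonneg_left g1 hL.le
  have g5 := mul_le_mul_of_nonneg_left g2 hL.le
  have g6 : 0 ≤ L * B * |avg z| := by positivity
  linarith

lemma memLp_cont (L : ℝ) (hL : 0 < L) (b : ℝ → ℝ) (hb : Continuous b) : MemLp b 2 (muL L) := by
  obtain ⟨B, hB⟩ := (isCompact_Icc (a := (0:ℝ)) (b := L)).exists_bound_of_continuousOn hb.continuousOn
  refine MemLp.of_bound hb.aestronglyMeasurable B ?_
  filter_upwards [ae_restrict_mem measurableSet_Ioc] with s hs using hB s ⟨hs.1.le, hs.2⟩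

lemma PP_all (L : ℝ) (hL : 0 < L) (l : ℝ → ℂ) (hsm : ContDiff ℝ (⊤ : ℕ∞) l) (hper : ∀ s, l (s + L) = l s)
    (harc : ∀ s, ‖deriv l s‖ = 1) (hinj : Set.InjOn l (Set.Ico 0 L))
    (K : ℝ × ℝ → ℝ) (hKC : ContDiff ℝ 1 K) (hK0 : ∀ t, ∫ s in (0:ℝ)..L, K (s, t) = 0)
    (hK : ∀ s t, ec L s ≠ ec L t → beta l s t = π / L * Real.cot (π * (s - t) / L) + K (s, t))
    (A) (C : ℝ) (N₁ : ℕ) (hA : Close L K A C N₁) (b : ℝ → ℝ) (hb : Continuous b) : PP L A b := by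
  let S : Submodule ℝ (Lp ℝ 2 (muL L)) :=
    { carrier := {g | ∃ b : ℝ → ℝ, Continuous b ∧ PP L A b ∧ g =ᵐ[muL L] b}
      add_mem' := by
        rintro g g' ⟨b, hb, hP, he⟩ ⟨b', hb', hP', he'⟩
        refine ⟨fun t => b t + b' t, hb.add hb', PP_add L A b b' hP hP', ?_⟩
        filter_upwards [Lp.coeFn_add g g', he, he'] with t h1 h2 h3
        rw [h1, Pi.add_apply, h2, h3]
      zero_mem' := by
        refine ⟨fun t => 0 * (1:ℝ), by fun_prop, PP_smul L A 0 _ (PP_one L hL A), ?_⟩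
        filter_upwards [Lp.coeFn_zero ℝ 2 (muL L)] with t h1
        rw [h1]; simp
      smul_mem' := by
        rintro c g ⟨b, hb, hP, he⟩
        refine ⟨fun t => c * b t, continuous_const.mul hb, PP_smul L A c b hP, ?_⟩
        filter_upwards [Lp.coeFn_smul c g, he] with t h1 h2
        rw [h1, Pi.smul_apply, h2, smul_eq_mul] }
  have hmem : ∀ b : ℝ → ℝ, ∀ hb : Continuous b, PP L A b → (memLp_cont L hL b hb).toLp b ∈ S := fun b hb hP =>
    ⟨b, hb, hP, MemLp.coeFn_toLp _⟩
  have horth : Sᗮ = ⊥ := by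
    rw [Submodule.eq_bot_iff]
    intro ζ hζ
    have hip : ∀ b : ℝ → ℝ, Continuous b → PP L A b → ∫ t, ζ t * b t ∂(muL L) = 0 := by
      intro b hb hP
      have := (Submodule.mem_orthogonal _ _).1 hζ _ (hmem b hb hP)
      rw [L2.inner_def] at this
      rw [← this]
      apply integral_congr_ae
      filter_upwards [MemLp.coeFn_toLp (memLp_cont L hL b hb)] with t ht
      rw [ht]; simp
    have h0 : ∫ t, ζ t ∂(muL L) = 0 := by
      have := hip (fun _ => 1) continuous_const (PP_one L hL A)
      simpa using this
    have := energy L hL l hsm hper harc hinj ζ (Lp.memLp ζ) h0 (fun φ m hφ hφp hm _ hmb => by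
      refine hip _ ?_ (PP_U L hL l K hKC hK0 hK A C N₁ hA φ hφ.continuous m hm hmb)
      exact intervalIntegral.continuous_parametric_intervalIntegral_of_continuous' (by fun_prop) 0 L)
    exact (Lp.eq_zero_iff_ae_eq_zero).2 this
  have htop := Submodule.topologicalClosure_eq_top_iff.2 horth
  apply PP_closed L hL A b hb
  intro δ hδ
  have hbm : (memLp_cont L hL b hb).toLp b ∈ closure (S : Set (Lp ℝ 2 (muL L))) := by
    have : (memLp_cont L hL b hb).toLp b ∈ S.topologicalClosure := by rw [htop]; trivial
    exact this
  obtain ⟨g, ⟨b', hb', hP', he⟩, hd⟩ := Metric.mem_closure_iff.1 hbm (Real.sqrt δ) (Real.sqrt_pos.2 hδ)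
  refine ⟨b', hb', hP', ?_⟩
  rw [dist_eq_norm] at hd
  have h1 : ‖(memLp_cont L hL b hb).toLp b - g‖ ^ 2 = ∫ s in (0:ℝ)..L, (b s - b' s) ^ 2 := by
    rw [← real_inner_self_eq_norm_sq, L2.inner_def, intervalIntegral.integral_of_le hL.le]
    apply integral_congr_ae
    filter_upwards [MemLp.coeFn_toLp (memLp_cont L hL b hb), he, Lp.coeFn_sub ((memLp_cont L hL b hb).toLp b) g] with t h1 h2 h3
    rw [h3, Pi.sub_apply, h1, h2]; simp [sq]
  rw [← h1, ← Real.sq_sqrt hδ.le]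
  gcongr

lemma PP_K (L : ℝ) (hL : 0 < L) (A) (K : ℝ × ℝ → ℝ) (hKC : ContDiff ℝ 1 K)
    (hP : ∀ b : ℝ → ℝ, Continuous b → PP L A b) (ε : ℝ) (hε : 0 < ε) :
    ∃ C : ℝ, 0 ≤ C ∧ ∃ N₀ : ℕ, ∀ N ≥ N₀, ∀ z : Fin N → ℝ, ∀ s ∈ Set.Icc 0 L,
    |L / N * ∑ j, K (s, tU L N j) * z j| ≤ ε * l2norm z + C * (|avg z| + l2norm (Ap A z)) := by
  obtain ⟨Λ, hΛ, hlip⟩ := lip_K L K hKC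
  let P : Set ℝ → Prop := fun S => ∃ C : ℝ, 0 ≤ C ∧ ∃ N₀ : ℕ, ∀ N ≥ N₀, ∀ z : Fin N → ℝ, ∀ s ∈ S,
    |L / N * ∑ j, K (s, tU L N j) * z j| ≤ ε * l2norm z + C * (|avg z| + l2norm (Ap A z))
  show P (Set.Icc 0 L)
  refine IsCompact.induction_on (p := P) isCompact_Icc ?_ ?_ ?_ ?_
  · exact ⟨0, le_rfl, 0, fun N _ z s hs => absurd hs (by simp)⟩
  · rintro S T hST ⟨C, hC, N₀, h⟩
    exact ⟨C, hC, N₀, fun N hN z s hs => h N hN z s (hST hs)⟩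
  · rintro S T ⟨C, hC, N₀, h⟩ ⟨C', hC', N₀', h'⟩
    refine ⟨C + C', by positivity, max N₀ N₀', fun N hN z s hs => ?_⟩
    have hnn : 0 ≤ |avg z| + l2norm (Ap A z) := add_nonneg (abs_nonneg _) (l2_nonneg _)
    rcases hs with hs | hs
    · have := h N (le_of_max_le_left hN) z s hs
      nlinarith
    · have := h' N (le_of_max_le_right hN) z s hs
      nlinarith
  · intro x hx
    have hKc := hKC.continuous
    obtain ⟨C, hC, N₀, h⟩ := hP (fun t => K (x, t)) (by fun_prop) (ε / 2) (by positivity)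
    set η := ε / (2 * L * (Λ + 1)) with hη
    have hη0 : 0 < η := by positivity
    refine ⟨Set.Icc 0 L ∩ Metric.closedBall x η, inter_mem_nhdsWithin _ (Metric.closedBall_mem_nhds x hη0), C, hC, N₀, fun N hN z s hs => ?_⟩
    have h1 := h N hN z
    have e : L / N * ∑ j, K (s, tU L N j) * z j = L / N * ∑ j, K (x, tU L N j) * z j + L * ((N:ℝ)⁻¹ * ∑ j, (K (s, tU L N j) - K (x, tU L N j)) * z j) := by
      simp only [sub_mul, Finset.sum_sub_distrib]; ring
    have h2 := sum_bd (fun j => K (s, tU L N j) - K (x, tU L N j)) z (Λ * η) (fun j => by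
      have ht := cell_sub L hL N j (tU_mem L hL N j)
      refine (hlip s hs.1 _ ht x hx _ ht).trans ?_
      gcongr
      simp only [sub_self, abs_zero]
      exact max_le (by simpa [Real.dist_eq] using hs.2) hη0.le) (by positivity)
    rw [e]
    refine (abs_add_le _ _).trans ?_
    have h3 : |L * ((N:ℝ)⁻¹ * ∑ j, (K (s, tU L N j) - K (x, tU L N j)) * z j)| ≤ ε / 2 * l2norm z := by
      rw [abs_mul, abs_mul, abs_of_pos hL, abs_of_nonneg (by positivity : 0 ≤ (N:ℝ)⁻¹)]
      have h4 : L * (Λ * η) ≤ ε / 2 := by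
        rw [hη]
        have : L * (Λ * (ε / (2 * L * (Λ + 1)))) = ε / 2 * (Λ / (Λ + 1)) := by field_simp
        rw [this]
        have : Λ / (Λ + 1) ≤ 1 := by rw [div_le_one (by positivity)]; linarith
        nlinarith
      calc _ ≤ L * (Λ * η * l2norm z) := mul_le_mul_of_nonneg_left h2 hL.le
        _ = L * (Λ * η) * l2norm z := by ring
        _ ≤ _ := by gcongr; exact l2_nonneg z
    linarith

lemma stability (L : ℝ) (hL : 0 < L) (A) (K : ℝ × ℝ → ℝ) (hKC : ContDiff ℝ 1 K)
    (hP : ∀ b : ℝ → ℝ, Continuous b → PP L A b) (C : ℝ) (N₁ : ℕ) (hA : Close L K A C N₁) :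
    ∃ C₂ : ℝ, 0 < C₂ ∧ ∃ N₀ : ℕ, N₁ ≤ N₀ ∧ ∀ N ≥ N₀, ∀ z : Fin N → ℝ, l2norm z ≤ C₂ * (|avg z| + l2norm (Ap A z)) := by
  obtain ⟨C', hC', N₂, hK⟩ := PP_K L hL A K hKC hP (1 / 4) (by norm_num)
  obtain ⟨hC, hN₁, hA⟩ := hA
  obtain ⟨n, hn⟩ := exists_nat_gt (4 * C)
  refine ⟨2 * (1 + C'), by positivity, max (max N₁ N₂) n, by omega, fun N hN z => ?_⟩
  have hnN : (n:ℝ) ≤ N := by exact_mod_cast (by omega : n ≤ N)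
  have hN0 : 0 < N := by omega
  have hNr : (0:ℝ) < N := by exact_mod_cast hN0
  let g : Fin N → ℝ := fun i => L / N * ∑ j, K (sU L N i, tU L N j) * z j
  let R : Fin N → Fin N → ℝ := fun i j => A N i j - (π / N * cn N ((i:ℕ) - (j:ℕ)) + L / N * K (sU L N i, tU L N j))
  let r : Fin N → ℝ := fun i => ∑ j, R i j * z j
  have hdec : ∀ i, Hd z i = π⁻¹ * (Ap A z i + (-1) * (g i + r i)) := by
    intro i
    have : Ap A z i = π * Hd z i + g i + r i := by
      simp only [Ap, g, r, R, Hd]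
      rw [← mul_assoc, Finset.mul_sum, Finset.mul_sum, ← Finset.sum_add_distrib, ← Finset.sum_add_distrib]
      refine Finset.sum_congr rfl fun j _ => ?_
      ring
    rw [this]
    have := Real.pi_ne_zero
    field_simp; ring
  have hg := l2_le_const g _ (by have := l2_nonneg z; have := l2_nonneg (Ap A z); positivity) (fun i => hK N (by omega) z _ (cell_sub L hL N i (sU_mem L hL N i)))
  have hr : l2norm r ≤ 1 / 4 * l2norm z := by
    refine l2_le_const r _ (by have := l2_nonneg z; positivity) (fun i => ?_)
    have h1 := sum_bd (R i) z (C / N ^ 2) (fun j => hA N (by omega) i j) (by positivity)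
    have h2 : |r i| ≤ C / N * l2norm z := by
      rw [inv_mul_le_iff₀ hNr] at h1
      refine h1.trans (le_of_eq ?_)
      field_simp
    refine h2.trans ?_
    have h3 : C / N ≤ 1 / 4 := by rw [div_le_iff₀ hNr]; linarith
    have := l2_nonneg z
    gcongr
  have h1 := l2norm_le_Hd hN0 z
  have h2 : l2norm (Hd z) ≤ l2norm (Ap A z) + (l2norm g + l2norm r) := by
    have e : Hd z = fun i => π⁻¹ * (Ap A z i + (-1) * (g i + r i)) := funext hdec
    rw [e, l2_smul]
    have hp : |π⁻¹| ≤ 1 := by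
      rw [abs_of_pos (by positivity)]
      exact inv_le_one_of_one_le₀ (by linarith [Real.pi_gt_three])
    have t1 := l2_add (Ap A z) (fun i => (-1) * (g i + r i))
    have t2 := l2_smul (-1) (fun i => g i + r i)
    have t3 := l2_add g r
    have t4 := l2_nonneg (fun i => Ap A z i + (-1) * (g i + r i))
    simp only [abs_neg, abs_one, one_mul] at t2
    nlinarith
  have h3 := l2_nonneg (Ap A z)
  have h4 := abs_nonneg (avg z)
  nlinarith

lemma final_bound {N : ℕ} (hN : 2 ≤ N) (A : (N : ℕ) → Fin N → Fin N → ℝ) (C₁ C₂ : ℝ) (hC₁ : 0 ≤ C₁) (hC₂ : 0 < C₂)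
    (hcol : ∀ j : Fin N, |∑ i, A N i j| ≤ C₁ / N)
    (hst : ∀ z : Fin N → ℝ, l2norm z ≤ C₂ * (|avg z| + l2norm (Ap A z)))
    (hbig : 2 * C₂ * C₁ ≤ Real.sqrt N) (v : Fin (N - 1) → ℝ) (z : Fin N → ℝ)
    (hz : ∀ i : Fin (N - 1), Ap A z (Fin.castLE (Nat.sub_le N 1) i) = v i) :
    l2norm z ≤ 2 * C₂ * (Real.sqrt (((N : ℝ) - 1)⁻¹ * ∑ i, v i ^ 2) + |avg z|
          + Real.sqrt (N : ℝ) * |((N : ℝ) - 1)⁻¹ * ∑ i, v i|) := by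
  obtain ⟨n, rfl⟩ : ∃ n, N = n + 1 := ⟨N - 1, by omega⟩
  change Fin n → ℝ at v
  change ∀ i : Fin n, Ap A z (Fin.castSucc i) = v i at hz
  show l2norm z ≤ 2 * C₂ * (Real.sqrt ((((n + 1 : ℕ) : ℝ) - 1)⁻¹ * ∑ i : Fin n, v i ^ 2) + |avg z|
          + Real.sqrt ((n + 1 : ℕ) : ℝ) * |(((n + 1 : ℕ) : ℝ) - 1)⁻¹ * ∑ i : Fin n, v i|)
  have hn : (1:ℝ) ≤ n := by exact_mod_cast (by omega : 1 ≤ n)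
  have en : (((n + 1 : ℕ) : ℝ) - 1) = n := by push_cast; ring
  rw [en]
  set m : ℝ := ((n + 1 : ℕ) : ℝ) with hm
  have hmn : m = n + 1 := by rw [hm]; push_cast; ring
  have hm0 : 0 < m := by linarith
  set q := Real.sqrt m with hq
  have hq0 : 0 < q := Real.sqrt_pos.2 hm0
  have hqq : q * q = m := Real.mul_self_sqrt hm0.le
  set y := Ap A z with hy
  set w := y (Fin.last n) with hw
  have hsum : ∑ i, y i = ∑ i, v i + w := by
    rw [Fin.sum_univ_castSucc]; simp only [hz]; rfl
  have hsq : ∑ i, y i ^ 2 = ∑ i, v i ^ 2 + w ^ 2 := by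
    rw [Fin.sum_univ_castSucc]; simp only [hz]; rfl
  have hs : |∑ i, y i| ≤ C₁ * l2norm z := by
    have e : ∑ i, y i = ∑ j, (∑ i, A (n + 1) i j) * z j := by
      simp only [hy, Ap]
      rw [Finset.sum_comm]
      simp only [Finset.sum_mul]
    have := sum_bd (fun j => ∑ i, A (n + 1) i j) z (C₁ / m) hcol (by positivity)
    rw [e]
    rw [inv_mul_le_iff₀ hm0] at this
    refine this.trans (le_of_eq ?_)
    field_simp
  have hwb : |w| ≤ C₁ * l2norm z + |∑ i, v i| := by
    have : w = ∑ i, y i - ∑ i, v i := by rw [hsum]; ring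
    rw [this]
    exact (abs_sub _ _).trans (by linarith)
  set a := Real.sqrt ((n:ℝ)⁻¹ * ∑ i, v i ^ 2) with ha
  have ha0 : 0 ≤ a := Real.sqrt_nonneg _
  have hS : 0 ≤ ∑ i, v i ^ 2 := Finset.sum_nonneg fun i _ => sq_nonneg _
  have ha2 : a ^ 2 = (n:ℝ)⁻¹ * ∑ i, v i ^ 2 := Real.sq_sqrt (by positivity)
  have hyb : l2norm y ≤ a + |w| / q := by
    apply le_of_sq_le_sq _ (by positivity)
    rw [l2_sq, hsq]
    have h1 : m⁻¹ * ∑ i, v i ^ 2 ≤ a ^ 2 := by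
      rw [ha2]
      exact mul_le_mul_of_nonneg_right (inv_anti₀ (by linarith) (by linarith)) hS
    have h2 : (|w| / q) ^ 2 = m⁻¹ * w ^ 2 := by
      rw [div_pow, sq_abs, sq q, hqq]; field_simp
    have h3 : 0 ≤ a * (|w| / q) := by positivity
    calc m⁻¹ * (∑ i, v i ^ 2 + w ^ 2) = m⁻¹ * ∑ i, v i ^ 2 + (|w| / q) ^ 2 := by rw [h2]; ring
      _ ≤ (a + |w| / q) ^ 2 := by nlinarith
  have hwq : |w| / q ≤ C₁ / q * l2norm z + q * |(n:ℝ)⁻¹ * ∑ i, v i| := by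
    rw [abs_mul, abs_of_pos (by positivity : 0 < (n:ℝ)⁻¹), div_le_iff₀ hq0]
    have e : (C₁ / q * l2norm z + q * ((n:ℝ)⁻¹ * |∑ i, v i|)) * q = C₁ * l2norm z + m * (n:ℝ)⁻¹ * |∑ i, v i| := by
      rw [← hqq]; field_simp
    rw [e]
    have h1 : 1 ≤ m * (n:ℝ)⁻¹ := by
      rw [← div_eq_mul_inv, one_le_div (by linarith)]; linarith
    have := abs_nonneg (∑ i, v i)
    nlinarith
  have hst' := hst z
  have hz0 := l2_nonneg z
  have hab : C₂ * (C₁ / q) ≤ 1 / 2 := by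
    rw [← mul_div_assoc, div_le_iff₀ hq0]; linarith
  have h5 : C₂ * l2norm y ≤ C₂ * (a + (C₁ / q * l2norm z + q * |(n:ℝ)⁻¹ * ∑ i, v i|)) :=
    mul_le_mul_of_nonneg_left (by linarith) hC₂.le
  have h6 : C₂ * (C₁ / q) * l2norm z ≤ 1 / 2 * l2norm z := mul_le_mul_of_nonneg_right hab hz0
  nlinarith

/-- Unique solvability and stability of the discrete vortex system. -/
theorem discrete_vortex_system_solvable
    (L : ℝ) (hL : 0 < L) (l : ℝ → ℂ)
    (hsm : ContDiff ℝ (⊤ : ℕ∞) l) (hper : ∀ s, l (s + L) = l s)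
    (harc : ∀ s, ‖deriv l s‖ = 1) (hinj : Set.InjOn l (Set.Ico 0 L))
    (horient : ∃ z₀ : ℂ, (∀ s, l s ≠ z₀) ∧
      (∫ t in (0:ℝ)..L, deriv l t / (l t - z₀)) = 2 * (π : ℂ) * Complex.I)
    (κ : ℕ) (hκ : 2 ≤ κ) (M : ℝ) (hM : 0 < M)
    (ms mst : (N : ℕ) → Fin N → ℝ)
    (hms : ∀ N, 2 ≤ N → ∀ i : Fin N, ms N i ∈ Set.Ico (0:ℝ) L ∧
      |ms N i - ((i : ℕ) : ℝ) * L / (N : ℝ)| ≤ M / (N : ℝ) ^ (κ + 1))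
    (hmst : ∀ N, 2 ≤ N → ∀ i : Fin N, mst N i ∈ Set.Ico (0:ℝ) L ∧
      |mst N i - (((i : ℕ) : ℝ) + 1/2) * L / (N : ℝ)| ≤ M / (N : ℝ) ^ (κ + 1)) :
    ∃ C > 0, ∃ N₀ : ℕ, ∀ N : ℕ, N₀ ≤ N → ∀ v : Fin (N - 1) → ℝ, ∀ γ : ℝ,
      (∃! z : Fin N → ℝ,
        (∀ i : Fin (N - 1),
          (L / (N : ℝ)) * (Bmat l (mst N) (ms N)).mulVec z (Fin.castLE (Nat.sub_le N 1) i)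
            = v i) ∧ avg z = γ) ∧
      ∀ z : Fin N → ℝ,
        ((∀ i : Fin (N - 1),
          (L / (N : ℝ)) * (Bmat l (mst N) (ms N)).mulVec z (Fin.castLE (Nat.sub_le N 1) i)
            = v i) ∧ avg z = γ) →
        l2norm z ≤ C * (Real.sqrt (((N : ℝ) - 1)⁻¹ * ∑ i, v i ^ 2) + |γ|
          + Real.sqrt (N : ℝ) * |((N : ℝ) - 1)⁻¹ * ∑ i, v i|) := by
  obtain ⟨K, hKC, hKp, hK0, hK⟩ := exists_K L hL l hsm hper harc hinj
  let A : (N : ℕ) → Fin N → Fin N → ℝ := fun N i j => L / N * beta l (mst N i) (ms N j)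
  obtain ⟨C, hC, N₁, hN₁, hA'⟩ := R_bound L hL l K hKC hK κ hκ M hM ms mst hms hmst
  have hA : Close L K A C N₁ := ⟨hC, hN₁, hA'⟩
  obtain ⟨C₁, hC₁, hcol⟩ := colsum L hL K hKC hK0 A C N₁ hA
  obtain ⟨C₂, hC₂, N₂, hN₂, hst⟩ := stability L hL A K hKC
    (PP_all L hL l hsm hper harc hinj K hKC hK0 hK A C N₁ hA) C N₁ hA
  obtain ⟨n, hn⟩ := exists_nat_gt ((2 * C₂ * C₁) ^ 2)
  refine ⟨2 * C₂, by positivity, max N₂ n, fun N hN => ?_⟩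
  have hN2 : 2 ≤ N := by omega
  have hNr : (0:ℝ) < N := by exact_mod_cast (by omega : 0 < N)
  have hbig : 2 * C₂ * C₁ ≤ Real.sqrt N := by
    apply Real.le_sqrt_of_sq_le
    have : (n:ℝ) ≤ N := by exact_mod_cast (by omega : n ≤ N)
    linarith
  have hAp : ∀ z : Fin N → ℝ, ∀ i, (L / (N : ℝ)) * (Bmat l (mst N) (ms N)).mulVec z i = Ap A z i := by
    intro z i
    simp only [Matrix.mulVec, dotProduct, Ap, A, Finset.mul_sum, Bmat, beta, Matrix.of_apply, mul_assoc]
  have hb := final_bound hN2 A C₁ C₂ hC₁ hC₂ (hcol N (by omega)) (hst N (by omega)) hbig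
  simp only [hAp]
  let T : (Fin N → ℝ) →ₗ[ℝ] (Fin (N - 1) → ℝ) × ℝ :=
    { toFun := fun z => (fun i => Ap A z (Fin.castLE (Nat.sub_le N 1) i), avg z)
      map_add' := by
        intro x y
        refine Prod.ext (funext fun i => ?_) ?_
        · simp [Ap, mul_add, Finset.sum_add_distrib]
        · simp [avg, mul_add, Finset.sum_add_distrib]
      map_smul' := by
        intro c x
        refine Prod.ext (funext fun i => ?_) ?_
        · simp only [Ap, Pi.smul_apply, smul_eq_mul, Finset.mul_sum, RingHom.id_apply, Prod.smul_fst]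
          exact Finset.sum_congr rfl fun j _ => by ring
        · simp only [avg, Pi.smul_apply, smul_eq_mul, Finset.mul_sum, RingHom.id_apply, Prod.smul_snd]
          exact Finset.sum_congr rfl fun j _ => by ring }
  have hinjT : Function.Injective T := by
    rw [← LinearMap.ker_eq_bot, LinearMap.ker_eq_bot']
    intro z hz
    have h1 : ∀ i, Ap A z (Fin.castLE (Nat.sub_le N 1) i) = 0 := fun i => congrFun (congrArg Prod.fst hz) i
    have h2 : avg z = 0 := congrArg Prod.snd hz
    have h3 := hb (fun _ => 0) z h1
    simp [h2] at h3
    have h4 : l2norm z = 0 := le_antisymm h3 (l2_nonneg z)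
    have h5 := l2_sq z
    rw [h4] at h5
    have h6 : ∑ i, z i ^ 2 = 0 := by
      have : (N:ℝ)⁻¹ ≠ 0 := by positivity
      have h7 : (N:ℝ)⁻¹ * ∑ i, z i ^ 2 = 0 := by rw [← h5]; norm_num
      exact (mul_eq_zero.1 h7).resolve_left this
    funext i
    have := (Finset.sum_eq_zero_iff_of_nonneg (fun i _ => sq_nonneg (z i))).1 h6 i (Finset.mem_univ i)
    simpa using this
  have hsurj : Function.Surjective T := by
    refine (LinearMap.injective_iff_surjective_of_finrank_eq_finrank ?_).1 hinjT
    simp; omega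
  intro v γ
  refine ⟨?_, ?_⟩
  · obtain ⟨z, hz⟩ := hsurj (v, γ)
    refine ⟨z, ⟨fun i => congrFun (congrArg Prod.fst hz) i, congrArg Prod.snd hz⟩, ?_⟩
    rintro z' ⟨h1, h2⟩
    apply hinjT
    rw [hz]
    exact Prod.ext (funext h1) h2
  · rintro z ⟨h1, h2⟩
    have := hb v z h1
    rwa [h2] at this
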